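/- Let (R,m) be a Cohen–Macaulay local ring of dimension two with infinite residue field, I_1,…,I_s m-primary ideals with s≥2, and F = {F(n)}_{n∈ℤ^s} an I-admissible filtration with H^1_{R_{++}}(R(F))_n = 0 for all n≥0. Then the following are equivalent: (1) P(F) = ℕ^s, i.e. P_F(n) = H_F(n) for all n≥0; (2) r_A(F) ≤ 1 for every good complete reduction A of F; (2') there exists a good complete reduction A of F with r_A(F) ≤ 1. -/

import Mathlib

/-! Common definitions for multigraded filtrations of ideals
(following Sarkar–Verma, "Postulation and reduction vectors of
multigraded filtrations of ideals"). -/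

open Finset IsLocalRing

/-- The vector `e = (1,…,1) ∈ ℤˢ`. -/
def evec (s : ℕ) : Fin s → ℤ := fun _ => 1

/-- `n⁺`, the componentwise positive part of a vector. -/
def vplus {s : ℕ} (n : Fin s → ℤ) : Fin s → ℤ := fun i => max (n i) 0

/-- `I^n = I₁^{n₁} ⋯ I_s^{n_s}` with the convention `I_i^{n_i} = R` for `n_i ≤ 0`. -/
def prodPow {R : Type*} [CommRing R] {s : ℕ} (I : Fin s → Ideal R) (n : Fin s → ℤ) : Ideal R :=
  ∏ i, I i ^ (n i).toNat

/-- An ideal is `m`-primary iff it is proper and contains a power of the maximal ideal. -/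
def IsMPrimary (R : Type*) [CommRing R] [IsLocalRing R] (I : Ideal R) : Prop :=
  I ≠ ⊤ ∧ maximalIdeal R ≤ I.radical

/-- A Cohen–Macaulay local ring: some system of parameters (a regular sequence of
length equal to the Krull dimension inside the maximal ideal) exists. -/
def IsCMLocal (R : Type*) [CommRing R] [IsLocalRing R] : Prop :=
  ∃ rs : List R, (∀ x ∈ rs, x ∈ maximalIdeal R) ∧ RingTheory.Sequence.IsRegular R rs ∧
    (rs.length : WithBot ℕ∞) = ringKrullDim R

/-- A `ℤˢ`-graded `I`-admissible filtration of ideals.  Admissibility (finiteness of the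
extended Rees ring `R'(F)` as a module over `R'(I)`) is recorded through the equivalent
condition that `F(n + m) = I^n F(m)` for all `n ≥ 0`, for a suitable fixed `m ≥ 0`. -/
structure AdmissibleFiltration (R : Type*) [CommRing R] (s : ℕ) (I : Fin s → Ideal R) where
  F : (Fin s → ℤ) → Ideal R
  prodPow_le : ∀ n, prodPow I n ≤ F n
  mul_le : ∀ m n, F m * F n ≤ F (m + n)
  antitone : ∀ m n : Fin s → ℤ, m ≤ n → F n ≤ F m
  plus_eq : ∀ n, F n = F (vplus n)
  admissible : ∃ m : Fin s → ℤ, 0 ≤ m ∧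
    ∀ n : Fin s → ℤ, 0 ≤ n → F (n + m) = prodPow I n * F m

/-- The length `λ_R(M)` of a module, as an integer (the longest chain of submodules;
this is the usual length for modules of finite length). -/
noncomputable def lenI (R M : Type*) [CommRing R] [AddCommGroup M] [Module R M] : ℤ :=
  (((Order.krullDim (Submodule R M)).unbotD 0).toNat : ℤ)

/-- The Hilbert function `H_F(n) = λ(R/F(n))` of a filtration. -/
noncomputable def hilbFn {R : Type*} [CommRing R] {s : ℕ} {I : Fin s → Ideal R}
    (F : AdmissibleFiltration R s I) (n : Fin s → ℤ) : ℤ :=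
  lenI R (R ⧸ F.F n)

/-- The multigraded Hilbert polynomial with coefficient data `c = (e_α)`:
`P(n) = Σ_{|α| ≤ d} (−1)^{d−|α|} e_α ∏ᵢ binom(nᵢ+αᵢ−1, αᵢ)`. -/
noncomputable def hilbPoly (s d : ℕ) (c : (Fin s → ℕ) → ℤ) (n : Fin s → ℤ) : ℤ :=
  ∑ α ∈ Finset.univ.filter (fun α : Fin s → Fin (d+1) => (∑ i, (α i : ℕ)) ≤ d),
    (-1)^(d - ∑ i, (α i : ℕ)) * c (fun i => (α i : ℕ)) *
      ∏ i, Ring.choose (n i + ((α i : ℕ) : ℤ) - 1) (α i : ℕ)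

/-- `c : (Fin s → ℕ) → ℤ` is the family of Hilbert coefficients of `F`:
the corresponding polynomial agrees with the Hilbert function for all large `n`. -/
noncomputable def IsHilbCoeffs {R : Type*} [CommRing R] {s : ℕ} {I : Fin s → Ideal R}
    (F : AdmissibleFiltration R s I) (d : ℕ) (c : (Fin s → ℕ) → ℤ) : Prop :=
  ∃ N : ℕ, ∀ n : Fin s → ℤ, (∀ i, (N : ℤ) ≤ n i) → hilbPoly s d c n = hilbFn F n

/-- The Samuel polynomial `P_a(n) = Σ_{i=0}^{d} (−1)^i e_i binom(n+d−1−i, d−i)` with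
coefficient data `c = (e_i)`. -/
noncomputable def samuelPoly (d : ℕ) (c : ℕ → ℤ) (n : ℤ) : ℤ :=
  ∑ i ∈ Finset.range (d + 1), (-1)^i * c i * Ring.choose (n + (d : ℤ) - 1 - (i : ℤ)) (d - i)

/-- `c` is the family of Hilbert coefficients of the `m`-primary ideal `a`. -/
noncomputable def IsSamuelCoeffs {R : Type*} [CommRing R] (a : Ideal R) (d : ℕ)
    (c : ℕ → ℤ) : Prop :=
  ∃ N : ℕ, ∀ n : ℕ, N ≤ n → samuelPoly d c (n : ℤ) = lenI R (R ⧸ a ^ n)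

section Reductions

variable {R : Type*} [CommRing R] {s d : ℕ} {I : Fin s → Ideal R}

/-- The ideal `J = (y₁,…,y_d)` of a complete reduction datum, where `y_j = x_{1j}⋯x_{sj}`. -/
def crIdeal (x : Fin s → Fin d → R) : Ideal R :=
  Ideal.span (Set.range fun j => ∏ i, x i j)

/-- `A = {x_{ij} ∈ I_i}` is a complete reduction of `F`: `J·F(n) = F(n+e)` for all large `n`. -/
def IsCompleteReduction (F : AdmissibleFiltration R s I) (x : Fin s → Fin d → R) : Prop :=
  (∀ i j, x i j ∈ I i) ∧
  ∃ N : ℕ, ∀ n : Fin s → ℤ, (∀ i, (N : ℤ) ≤ n i) →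
    crIdeal x * F.F n = F.F (n + evec s)

/-- A good complete reduction: in addition `F(m) ∩ (y₁) = y₁ F(m−e)` for all large `m`. -/
def IsGoodCompleteReduction (F : AdmissibleFiltration R s I) (x : Fin s → Fin d → R) : Prop :=
  IsCompleteReduction F x ∧
  ∀ h : 0 < d, ∃ N : ℕ, ∀ m : Fin s → ℤ, (∀ i, (N : ℤ) ≤ m i) →
    F.F m ⊓ Ideal.span {∏ i, x i ⟨0, h⟩} =
      Ideal.span {∏ i, x i ⟨0, h⟩} * F.F (m - evec s)

end Reductions

/-- The first difference operator `Δ¹ f (n) = f(n+e) − f(n)`; `Δ^k` is its `k`-th iterate. -/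
def deltaOp {s : ℕ} (f : (Fin s → ℤ) → ℤ) : (Fin s → ℤ) → ℤ :=
  fun n => f (n + evec s) - f n

/-- The Ratliff–Rush closure filtration `F̆(n) = ⋃_{k ≥ 1} (F(n+ke) : F(e)^k)`. -/
def ratliffRush {R : Type*} [CommRing R] {s : ℕ} {I : Fin s → Ideal R}
    (F : AdmissibleFiltration R s I) (n : Fin s → ℤ) : Ideal R :=
  ⨆ k : ℕ, (F.F (n + ((k + 1) : ℕ) • evec s)).colon ((F.F (evec s) ^ (k + 1) : Ideal R) : Set R)

/-- Vanishing of `H¹_{R₊₊}(R(F))_n` for all `n ∈ ℕˢ`.  By Proposition 4.1 of the paper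
(see STATEMENT 9), the degree-`n` component of this local cohomology module is isomorphic
to `F̆(n)/F(n)`, so its vanishing for all `n ≥ 0` is the statement that the Ratliff–Rush
closure filtration agrees with `F` in all nonnegative degrees. -/
def H1ReesVanishes {R : Type*} [CommRing R] {s : ℕ} {I : Fin s → Ideal R}
    (F : AdmissibleFiltration R s I) : Prop :=
  ∀ n : Fin s → ℤ, 0 ≤ n → ratliffRush F n = F.F n

section PostulationReduction

variable {R : Type*} [CommRing R] {s d : ℕ} {I : Fin s → Ideal R}

/-- The set `P(F)` of postulation vectors of `F` (w.r.t. the Hilbert coefficient data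
`c` of its Hilbert polynomial): those `n ∈ ℤˢ` with `H_F(m) = P_F(m)` for all `m ≥ n`. -/
noncomputable def postSet (F : AdmissibleFiltration R s I) (d : ℕ)
    (c : (Fin s → ℕ) → ℤ) : Set (Fin s → ℤ) :=
  {n | ∀ m : Fin s → ℤ, n ≤ m → hilbFn F m = hilbPoly s d c m}

/-- The set `R_A(F)` of reduction vectors of `F` with respect to a complete reduction
datum `x`: those `r ∈ ℕˢ` with `J·F(n) = F(n+e)` for all `n ≥ r`. -/
def redSet (F : AdmissibleFiltration R s I) (x : Fin s → Fin d → R) :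
    Set (Fin s → ℤ) :=
  {r | 0 ≤ r ∧ ∀ n : Fin s → ℤ, r ≤ n → crIdeal x * F.F n = F.F (n + evec s)}

/-- The complete reduction number `r_A(F)`: the least `k ∈ ℕ` such that
`J·F(n) = F(n+e)` for all `n ≥ ke`. -/
noncomputable def crNumber (F : AdmissibleFiltration R s I) (x : Fin s → Fin d → R) : ℕ :=
  sInf {k : ℕ | ∀ n : Fin s → ℤ, (∀ i, (k : ℤ) ≤ n i) →
    crIdeal x * F.F n = F.F (n + evec s)}

end PostulationReduction

/-!
Let `y₁, y₂` generate the ideal `J` of a complete reduction. They form a regular sequence, and the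
vanishing of `H¹` gives `F(n+e) : J = F(n)` for `n ≥ 0`, so Huneke's fundamental lemma reads
`λ(R/JF(n+e)) + H_F(n) = 2H_F(n+e) + λ(R/J)`. Hence `JF(n+e) = F(n+2e)` exactly when
`Δ²H_F(n) = λ(R/J)`. Since `λ(R/J)` is also the constant value of `Δ²P_F`, the condition
`r_A(F) ≤ 1` says that `Δ²(H_F - P_F) = 0` on `ℕˢ`, which forces `H_F = P_F` there because the
difference vanishes eventually.

No postulation vector has a negative entry: the mixed second differences of `P_F` are positive,
whereas `H_F(n + eᵢ) = H_F(n)` when `nᵢ = -1`.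

Good complete reductions exist because a general element of `Iᵢ` avoids the relevant associated
primes of the multi-Rees algebra; the second column is chosen superficial modulo the first product
`y₁`, and a length count followed by Nakayama turns superficiality into the reduction property.
-/

section Length

variable {R M N : Type*} [CommRing R] [AddCommGroup M] [Module R M] [AddCommGroup N] [Module R N]

theorem length_quotient_comap_add_length_quotient_range_sup (f : M →ₗ[R] N) (C : Submodule R N) :
    Module.length R (M ⧸ C.comap f) + Module.length R (N ⧸ LinearMap.range f ⊔ C) =
      Module.length R (N ⧸ C) := by
  let g : M →ₗ[R] N ⧸ C := C.mkQ ∘ₗ f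
  have hker : LinearMap.ker g = C.comap f := by simp only [g, LinearMap.ker_comp, Submodule.ker_mkQ]
  have hrange : LinearMap.range g = (LinearMap.range f).map C.mkQ := LinearMap.range_comp f C.mkQ
  rw [← hker, g.quotKerEquivRange.length_eq, sup_comm,
    ← (Submodule.quotientQuotientEquivQuotientSup C (LinearMap.range f)).length_eq, ← hrange]
  exact (Module.length_eq_add_of_exact _ _ (Submodule.subtype_injective _)
    (Submodule.mkQ_surjective _) (LinearMap.exact_subtype_mkQ _)).symm

theorem length_quotient_add_length_quotient (f : M →ₗ[R] N) (A : Submodule R M)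
    (C : Submodule R N) :
    Module.length R (N ⧸ C) + Module.length R (M ⧸ A) =
      Module.length R (M ⧸ A ⊓ C.comap f) + Module.length R (N ⧸ A.map f ⊔ C) := by
  have hN := length_quotient_comap_add_length_quotient_range_sup (f ∘ₗ A.subtype) C
  have hM := length_quotient_comap_add_length_quotient_range_sup A.subtype (A ⊓ C.comap f)
  rw [LinearMap.range_comp, Submodule.range_subtype] at hN
  rw [Submodule.range_subtype, sup_eq_left.mpr inf_le_left, Submodule.comap_inf,
    Submodule.comap_subtype_self, top_inf_eq, ← Submodule.comap_comp] at hM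
  rw [← hN, ← hM]
  ring

theorem length_quotient_prod (A : Submodule R M) (C : Submodule R N) :
    Module.length R ((M × N) ⧸ A.prod C) = Module.length R (M ⧸ A) + Module.length R (N ⧸ C) := by
  have hker : LinearMap.ker (A.mkQ.prodMap C.mkQ) = A.prod C := by
    rw [LinearMap.ker_prodMap, Submodule.ker_mkQ, Submodule.ker_mkQ]
  have hsurj : Function.Surjective (A.mkQ.prodMap C.mkQ) :=
    Prod.map_surjective.mpr ⟨A.mkQ_surjective, C.mkQ_surjective⟩
  rw [← hker, (LinearMap.quotKerEquivOfSurjective _ hsurj).length_eq, Module.length_prod]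

theorem length_quotient_anti {A B : Submodule R M} (h : A ≤ B) :
    Module.length R (M ⧸ B) ≤ Module.length R (M ⧸ A) :=
  Module.length_le_of_surjective (Submodule.factor h) (Submodule.factor_surjective h)

theorem eq_of_le_of_length_quotient_le {A B : Submodule R M} (h : A ≤ B)
    (hfin : Module.length R (M ⧸ B) ≠ ⊤)
    (hlen : Module.length R (M ⧸ A) ≤ Module.length R (M ⧸ B)) : A = B := by
  simp only [Module.length_quotient] at hfin hlen
  exact h.eq_or_lt.resolve_right fun hlt =>
    (Order.coheight_strictAnti hlt hfin.lt_top).not_ge hlen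

theorem length_quotient_ne_top [IsLocalRing R] [IsNoetherianRing R] {K : Ideal R}
    (hK : maximalIdeal R ≤ K.radical) : Module.length R (R ⧸ K) ≠ ⊤ := by
  have hprime (P : Ideal (R ⧸ K)) (hP : P.IsPrime) : P.IsMaximal := by
    have hcomap := hP.comap (Ideal.Quotient.mk K)
    have hle : K ≤ P.comap (Ideal.Quotient.mk K) := by
      simpa only [Ideal.mk_ker] using Ideal.ker_le_comap (Ideal.Quotient.mk K) (K := P)
    have heq := (maximalIdeal.isMaximal R).eq_of_le hcomap.ne_top
      (hK.trans (hcomap.radical_le_iff.mpr hle))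
    exact Ideal.isMaximal_of_isIntegral_of_isMaximal_comap P (heq ▸ maximalIdeal.isMaximal R)
  have : Ring.KrullDimLE 0 (R ⧸ K) := Ring.krullDimLE_zero_iff.mpr hprime
  have : IsArtinianRing (R ⧸ K) := IsNoetherianRing.isArtinianRing_of_krullDimLE_zero
  rw [Module.length_eq_of_surjective (R := R ⧸ K) (S := R) Ideal.Quotient.mk_surjective]
  exact Module.length_ne_top

theorem lenI_eq_toNat_length : lenI R M = (Module.length R M).toNat := by
  rw [lenI, ← Module.coe_length]
  rfl

end Length

section Koszul

variable {R : Type*} [CommRing R]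

/-- Exactness in the middle of the Koszul complex of the pair `a, b`. For two elements
of the maximal ideal of a Noetherian local ring this amounts to being a regular sequence, in a form
symmetric in the two generators. -/
def KoszulExact (a b : R) : Prop :=
  ∀ r t : R, r * a + t * b = 0 → ∃ u, r = u * b ∧ t = -(u * a)

/-- Huneke's fundamental lemma. -/
theorem length_quotient_span_pair_mul {a b : R} (hab : KoszulExact a b) (K : Ideal R) :
    Module.length R (R ⧸ Ideal.span {a, b} * K) + Module.length R (R ⧸ K.colon {a, b}) =
      2 * Module.length R (R ⧸ K) + Module.length R (R ⧸ Ideal.span {a, b}) := by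
  let f : R × R →ₗ[R] R := (LinearMap.mulRight R a).coprod (LinearMap.mulRight R b)
  let h : R →ₗ[R] R × R := (LinearMap.mulRight R b).prod (-LinearMap.mulRight R a)
  have hf : LinearMap.range f = Ideal.span {a, b} := by
    ext z
    simp [f, Ideal.mem_span_pair]
  have hfK : (Submodule.prod K K).map f = Ideal.span {a, b} * K := by
    ext z
    simp [f, Ideal.span_insert, Ideal.sup_mul, Submodule.mem_sup, Ideal.mem_span_singleton_mul,
      mul_comm _ a, mul_comm _ b]
  have hker : LinearMap.ker f = LinearMap.range h := by
    ext ⟨r, t⟩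
    refine ⟨fun hrt => ?_, ?_⟩
    · obtain ⟨u, rfl, rfl⟩ := hab r t hrt
      exact ⟨u, rfl⟩
    · rintro ⟨u, hu⟩
      obtain ⟨rfl, rfl⟩ := Prod.ext_iff.mp hu
      simp [f, h]
      ring
  have hcolon : (Submodule.prod K K).comap h = K.colon {a, b} := by
    ext r
    simp [h, Submodule.mem_colon, and_comm]
  have hcomap : Submodule.comap f (Ideal.span {a, b} * K) =
      LinearMap.range h ⊔ Submodule.prod K K := by
    rw [← hfK, Submodule.comap_map_eq, hker, sup_comm]
  have hsource := length_quotient_comap_add_length_quotient_range_sup h (Submodule.prod K K)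
  have htarget := length_quotient_comap_add_length_quotient_range_sup f (Ideal.span {a, b} * K)
  rw [hcolon, length_quotient_prod, ← two_mul] at hsource
  rw [hf, sup_eq_left.mpr Ideal.mul_le_left, hcomap] at htarget
  rw [← htarget, ← hsource]
  ring

theorem pow_dvd_of_pow_dvd_pow_mul {a b : R} (ha : IsLeftRegular a) (hab : ∀ r, a ∣ b * r → a ∣ r)
    (k l : ℕ) {r : R} (h : a ^ k ∣ b ^ l * r) : a ^ k ∣ r := by
  have hbl (l : ℕ) : ∀ r, a ∣ b ^ l * r → a ∣ r := by
    induction l with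
    | zero => simp
    | succ l ih => exact fun r hr => ih r (hab _ (by rwa [← mul_assoc, ← pow_succ']))
  induction k generalizing r with
  | zero => simp
  | succ k ih =>
    obtain ⟨q, rfl⟩ := hbl l r ((dvd_pow_self a k.succ_ne_zero).trans h)
    obtain ⟨t, ht⟩ := h
    rw [pow_succ']
    exact mul_dvd_mul_left a (ih ⟨t, ha (by linear_combination ht)⟩)

theorem koszulExact_of_mem_span_pair {a b y₁ y₂ : R} (ha : IsLeftRegular a)
    (hab : ∀ r, a ∣ b * r → a ∣ r) (ha' : a ∈ Ideal.span {y₁, y₂})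
    (hb' : b ∈ Ideal.span {y₁, y₂}) : KoszulExact y₁ y₂ := by
  obtain ⟨α, β, rfl⟩ := Ideal.mem_span_pair.mp ha'
  obtain ⟨γ, δ, rfl⟩ := Ideal.mem_span_pair.mp hb'
  intro r t hrt
  obtain ⟨u, hu⟩ := hab (β * r - α * t) ⟨δ * r - γ * t, by linear_combination (β * γ - α * δ) * hrt⟩
  refine ⟨u, ha ?_, ha ?_⟩
  · linear_combination y₂ * hu + α * hrt
  · linear_combination β * hrt - y₁ * hu

open scoped Pointwise in
theorem IsCMLocal.koszulExact [IsLocalRing R] (hCM : IsCMLocal R)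
    (hdim : ringKrullDim R = 2) {y₁ y₂ : R}
    (hy : maximalIdeal R ≤ (Ideal.span {y₁, y₂}).radical) : KoszulExact y₁ y₂ := by
  obtain ⟨rs, hm, hreg, hlen⟩ := hCM
  obtain ⟨a, b, rfl⟩ := List.length_eq_two.mp (by exact_mod_cast hlen.trans hdim)
  simp only [RingTheory.Sequence.isRegular_iff,
    RingTheory.Sequence.isWeaklyRegular_cons_iff] at hreg
  obtain ⟨⟨ha, hb, -⟩, -⟩ := hreg
  have hmem (r : R) : r ∈ a • (⊤ : Submodule R R) ↔ a ∣ r := by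
    simp [Submodule.mem_smul_pointwise_iff_exists, dvd_def, eq_comm]
  have hab (r : R) : a ∣ b * r → a ∣ r := by
    simpa only [hmem, smul_eq_mul] using (isSMulRegular_quotient_iff_mem_of_smul_mem _ _).mp hb r
  obtain ⟨k, hk⟩ := hy (hm a (by simp))
  obtain ⟨l, hl⟩ := hy (hm b (by simp))
  exact koszulExact_of_mem_span_pair (IsLeftRegular.pow k ha)
    (fun _ => pow_dvd_of_pow_dvd_pow_mul ha hab k l) hk hl

end Koszul

section Colength

variable {R : Type*} [CommRing R] [IsLocalRing R] [IsNoetherianRing R]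

theorem exists_length_quotient_eq_coe {K : Ideal R} (hK : maximalIdeal R ≤ K.radical) :
    ∃ n : ℕ, Module.length R (R ⧸ K) = n ∧ lenI R (R ⧸ K) = n := by
  obtain ⟨n, hn⟩ := ENat.ne_top_iff_exists.mp (length_quotient_ne_top hK)
  exact ⟨n, hn.symm, by rw [lenI_eq_toNat_length, ← hn, ENat.toNat_natCast]⟩

theorem lenI_quotient_span_pair_mul {a b : R} (hab : KoszulExact a b) {K : Ideal R}
    (hJ : maximalIdeal R ≤ (Ideal.span {a, b}).radical) (hK : maximalIdeal R ≤ K.radical) :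
    lenI R (R ⧸ Ideal.span {a, b} * K) + lenI R (R ⧸ K.colon {a, b}) =
      2 * lenI R (R ⧸ K) + lenI R (R ⧸ Ideal.span {a, b}) := by
  have hlen := length_quotient_span_pair_mul hab K
  have hJK : maximalIdeal R ≤ (Ideal.span {a, b} * K).radical := by
    rw [Ideal.radical_mul]
    exact le_inf hJ hK
  have hcolon : K ≤ K.colon {a, b} := Ideal.le_colon
  obtain ⟨j, hj, hj'⟩ := exists_length_quotient_eq_coe hJ
  obtain ⟨k, hk, hk'⟩ := exists_length_quotient_eq_coe hK
  obtain ⟨p, hp, hp'⟩ := exists_length_quotient_eq_coe hJK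
  obtain ⟨q, hq, hq'⟩ := exists_length_quotient_eq_coe (hK.trans (Ideal.radical_mono hcolon))
  rw [hj, hk, hp, hq] at hlen
  rw [hj', hk', hp', hq']
  exact_mod_cast hlen

theorem lenI_quotient_anti {A B : Ideal R} (h : A ≤ B) (hA : maximalIdeal R ≤ A.radical) :
    lenI R (R ⧸ B) ≤ lenI R (R ⧸ A) := by
  rw [lenI_eq_toNat_length, lenI_eq_toNat_length]
  exact_mod_cast ENat.toNat_le_toNat (length_quotient_anti h) (length_quotient_ne_top hA)

theorem eq_of_le_of_lenI_quotient_le {A B : Ideal R} (h : A ≤ B)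
    (hA : maximalIdeal R ≤ A.radical) (hlen : lenI R (R ⧸ A) ≤ lenI R (R ⧸ B)) : A = B := by
  have hB := hA.trans (Ideal.radical_mono h)
  obtain ⟨k, hk, hk'⟩ := exists_length_quotient_eq_coe hA
  obtain ⟨l, hl, hl'⟩ := exists_length_quotient_eq_coe hB
  refine eq_of_le_of_length_quotient_le h (length_quotient_ne_top hB) ?_
  rw [hk, hl]
  rw [hk', hl'] at hlen
  exact_mod_cast hlen

theorem lenI_quotient_pos {K : Ideal R} (hK : maximalIdeal R ≤ K.radical) (hne : K ≠ ⊤) :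
    0 < lenI R (R ⧸ K) := by
  have := Ideal.Quotient.nontrivial_iff.mpr hne
  obtain ⟨k, hk, hk'⟩ := exists_length_quotient_eq_coe hK
  rw [hk']
  exact_mod_cast hk ▸ Module.length_pos (R := R) (M := R ⧸ K)

end Colength

open Filter fwdDiff

section Eventually

theorem eventually_atTop_iff_exists_nat {ι : Type*} [Finite ι] {p : (ι → ℤ) → Prop} :
    (∀ᶠ n in atTop, p n) ↔ ∃ N : ℕ, ∀ n : ι → ℤ, (∀ i, (N : ℤ) ≤ n i) → p n := by
  cases nonempty_fintype ι
  rw [eventually_atTop]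
  constructor
  · rintro ⟨a, ha⟩
    refine ⟨∑ i, (a i).toNat, fun n hn => ha n fun i => ?_⟩
    have hsum : (a i).toNat ≤ ∑ i, (a i).toNat :=
      Finset.single_le_sum (f := fun i => (a i).toNat) (fun _ _ => Nat.zero_le _)
        (Finset.mem_univ i)
    exact (Int.toNat_le.mp hsum).trans (hn i)
  · rintro ⟨N, hN⟩
    exact ⟨fun _ => N, hN⟩

theorem eventually_atTop_add_right {M : Type*} [AddCommGroup M] [PartialOrder M]
    [IsOrderedAddMonoid M] {p : M → Prop} (h : ∀ᶠ n in atTop, p n) (a : M) :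
    ∀ᶠ n in atTop, p (n + a) :=
  (tendsto_atTop_add_const_right _ a tendsto_id).eventually h

end Eventually

theorem evec_nonneg (s : ℕ) : 0 ≤ evec s := fun _ => zero_le_one

theorem eq_zero_of_eventually_of_fwdDiff_evec_eq_zero {s : ℕ} {g : (Fin s → ℤ) → ℤ}
    (hg : ∀ᶠ n in atTop, g n = 0) (hΔ : ∀ n, 0 ≤ n → Δ_[evec s] g n = 0) {n : Fin s → ℤ}
    (hn : 0 ≤ n) : g n = 0 := by
  have hshift (k : ℕ) : g (n + k • evec s) = g n := by
    induction k with
    | zero => rw [zero_nsmul, add_zero]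
    | succ k ih =>
      rw [← ih, succ_nsmul, ← add_assoc]
      exact sub_eq_zero.mp (hΔ _ (add_nonneg hn (nsmul_nonneg (evec_nonneg s) k)))
  obtain ⟨N, hN⟩ := eventually_atTop_iff_exists_nat.mp hg
  rw [← hshift N]
  exact hN _ fun i => by simpa [evec] using hn i

section ProdPow

variable {R : Type*} [CommRing R] {s : ℕ} {I : Fin s → Ideal R}

theorem prodPow_zero : prodPow I 0 = ⊤ := by
  simp [prodPow, Ideal.one_eq_top]

theorem prodPow_add {a b : Fin s → ℤ} (ha : 0 ≤ a) (hb : 0 ≤ b) :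
    prodPow I (a + b) = prodPow I a * prodPow I b := by
  simp only [prodPow, ← Finset.prod_mul_distrib, ← pow_add, Pi.add_apply]
  exact Finset.prod_congr rfl fun i _ => by rw [Int.toNat_add (ha i) (hb i)]

theorem prodPow_single (i : Fin s) : prodPow I (Pi.single i 1) = I i := by
  rw [prodPow, Finset.prod_eq_single i] <;> simp +contextual

theorem prodPow_evec : prodPow I (evec s) = ∏ i, I i := by
  simp [prodPow, evec]

theorem maximalIdeal_le_radical_prodPow [IsLocalRing R]
    (hI : ∀ i, maximalIdeal R ≤ (I i).radical) (n : Fin s → ℤ) :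
    maximalIdeal R ≤ (prodPow I n).radical := by
  refine Finset.prod_induction _ (maximalIdeal R ≤ Ideal.radical ·)
    (fun A B hA hB => (le_inf hA hB).trans_eq (Ideal.radical_mul A B).symm) ?_ fun i _ => ?_
  · rw [Ideal.one_eq_top, Ideal.radical_top]
    exact le_top
  · exact (hI i).trans (Ideal.radical_le_radical_iff.mpr fun r hr => ⟨_, Ideal.pow_mem_pow hr _⟩)

end ProdPow

section Filtration

variable {R : Type*} [CommRing R] {s d : ℕ} {I : Fin s → Ideal R} (F : AdmissibleFiltration R s I)

namespace AdmissibleFiltration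

theorem maximalIdeal_le_radical [IsLocalRing R] (hI : ∀ i, maximalIdeal R ≤ (I i).radical)
    (n : Fin s → ℤ) : maximalIdeal R ≤ (F.F n).radical :=
  (maximalIdeal_le_radical_prodPow hI n).trans (Ideal.radical_mono (F.prodPow_le n))

theorem F_zero : F.F 0 = ⊤ :=
  top_le_iff.mp (prodPow_zero.ge.trans (F.prodPow_le 0))

theorem mul_mem {m n k : Fin s → ℤ} (h : k ≤ m + n) {a b : R} (ha : a ∈ F.F m) (hb : b ∈ F.F n) :
    a * b ∈ F.F k :=
  F.antitone _ _ h (F.mul_le m n (Ideal.mul_mem_mul ha hb))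

theorem ideal_le (i : Fin s) : I i ≤ F.F (Pi.single i 1) :=
  (prodPow_single i).ge.trans (F.prodPow_le _)

theorem prod_mem {x : Fin s → R} (hx : ∀ i, x i ∈ I i) : ∏ i, x i ∈ F.F (evec s) :=
  F.prodPow_le _ (prodPow_evec (I := I) ▸ Ideal.prod_mem_prod fun i _ => hx i)

theorem eventually_forall_F_add :
    ∀ᶠ n in atTop, ∀ a, 0 ≤ a → F.F (n + a) = prodPow I a * F.F n := by
  obtain ⟨m, -, hm⟩ := F.admissible
  filter_upwards [eventually_ge_atTop m] with n hn a ha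
  have hnm := hm (n - m) (sub_nonneg.mpr hn)
  have hnam := hm (a + (n - m)) (add_nonneg ha (sub_nonneg.mpr hn))
  rw [sub_add_cancel] at hnm
  rwa [prodPow_add ha (sub_nonneg.mpr hn), mul_assoc, ← hnm, add_assoc, sub_add_cancel,
    add_comm] at hnam

theorem F_evec_pow_le (k : ℕ) : F.F (evec s) ^ k ≤ F.F (k • evec s) := by
  induction k with
  | zero => simp [F_zero]
  | succ k ih =>
    rw [pow_succ, succ_nsmul]
    exact (Ideal.mul_mono_left ih).trans (F.mul_le _ _)

end AdmissibleFiltration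

variable {F}

theorem IsHilbCoeffs.eventually_hilbFn_eq {c : (Fin s → ℕ) → ℤ} (hc : IsHilbCoeffs F d c) :
    ∀ᶠ n in atTop, hilbFn F n = hilbPoly s d c n :=
  (eventually_atTop_iff_exists_nat.mpr hc).mono fun _ => Eq.symm

theorem H1ReesVanishes.mem_of_eventually_mul_mem (hF : H1ReesVanishes F) {n : Fin s → ℤ}
    (hn : 0 ≤ n) {r : R} (h : ∀ᶠ a in atTop, ∀ f ∈ F.F a, r * f ∈ F.F (n + a)) : r ∈ F.F n := by
  obtain ⟨k, hk⟩ := eventually_atTop_iff_exists_nat.mp h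
  rw [← hF n hn]
  refine (le_iSup (fun k : ℕ => (F.F (n + (k + 1) • evec s)).colon
    (F.F (evec s) ^ (k + 1) : Ideal R)) k) (Submodule.mem_colon.mpr fun f hf => ?_)
  exact hk _ (fun i => by simp [evec]) f (F.F_evec_pow_le _ hf)

theorem hilbFn_add_single_of_eq_neg_one {n : Fin s → ℤ} {i : Fin s} (hi : n i = -1) :
    hilbFn F (n + Pi.single i 1) = hilbFn F n := by
  have hplus : vplus (n + Pi.single i 1) = vplus n := by
    ext j
    obtain rfl | hij := eq_or_ne j i
    · simp [vplus, hi]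
    · simp [vplus, hij]
  rw [hilbFn, F.plus_eq, hplus, ← F.plus_eq, hilbFn]

section CompleteReduction

variable {x : Fin s → Fin d → R}

theorem crIdeal_le (F : AdmissibleFiltration R s I) (hx : ∀ i j, x i j ∈ I i) :
    crIdeal x ≤ F.F (evec s) := by
  rw [crIdeal, Ideal.span_le]
  rintro _ ⟨j, rfl⟩
  exact F.prod_mem fun i => hx i j

theorem crIdeal_mul_le (F : AdmissibleFiltration R s I) (hx : ∀ i j, x i j ∈ I i)
    (n : Fin s → ℤ) : crIdeal x * F.F n ≤ F.F (n + evec s) := by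
  rw [add_comm]
  exact (Ideal.mul_mono_left (crIdeal_le F hx)).trans (F.mul_le _ _)

theorem IsCompleteReduction.eventually_crIdeal_mul (hx : IsCompleteReduction F x) :
    ∀ᶠ n in atTop, crIdeal x * F.F n = F.F (n + evec s) :=
  eventually_atTop_iff_exists_nat.mpr hx.2

theorem IsCompleteReduction.maximalIdeal_le_radical [IsLocalRing R]
    (hI : ∀ i, maximalIdeal R ≤ (I i).radical) (hx : IsCompleteReduction F x) :
    maximalIdeal R ≤ (crIdeal x).radical := by
  obtain ⟨n, hn⟩ := hx.eventually_crIdeal_mul.exists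
  exact (F.maximalIdeal_le_radical hI (n + evec s)).trans
    (Ideal.radical_mono (hn.ge.trans Ideal.mul_le_left))

theorem IsCompleteReduction.colon_eq (hF : H1ReesVanishes F) (hx : IsCompleteReduction F x)
    {n : Fin s → ℤ} (hn : 0 ≤ n) :
    (F.F (n + evec s)).colon (Set.range fun j => ∏ i, x i j) = F.F n := by
  refine le_antisymm (fun r hr => hF.mem_of_eventually_mul_mem hn ?_) fun r hr =>
    Submodule.mem_colon.mpr ?_
  · rw [← Ideal.colon_span] at hr
    have hrJ : Ideal.span {r} * crIdeal x ≤ F.F (n + evec s) :=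
      Ideal.span_singleton_mul_le_iff.mpr (Submodule.mem_colon.mp hr)
    filter_upwards [eventually_atTop_add_right hx.eventually_crIdeal_mul (-evec s)] with a ha f hf
    rw [neg_add_cancel_right] at ha
    have hle : Ideal.span {r} * F.F a ≤ F.F (n + a) := by
      rw [← ha, ← mul_assoc]
      exact (Ideal.mul_mono_left hrJ).trans ((F.mul_le _ _).trans_eq (by congr 1; abel))
    exact Ideal.span_singleton_mul_le_iff.mp hle f hf
  · rintro _ ⟨j, rfl⟩
    exact F.mul_mem le_rfl hr (F.prod_mem fun i => hx.1 i j)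

theorem IsCompleteReduction.crNumber_le_one_iff (hx : IsCompleteReduction F x) :
    crNumber F x ≤ 1 ↔
      ∀ n, 0 ≤ n → crIdeal x * F.F (n + evec s) = F.F (n + evec s + evec s) := by
  let S : Set ℕ := {k | ∀ n : Fin s → ℤ, (∀ i, (k : ℤ) ≤ n i) →
    crIdeal x * F.F n = F.F (n + evec s)}
  have hup {k l : ℕ} (hkl : k ≤ l) (hk : k ∈ S) : l ∈ S :=
    fun n hn => hk n fun i => (Int.ofNat_le.mpr hkl).trans (hn i)
  have hone : crNumber F x ≤ 1 ↔ 1 ∈ S :=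
    ⟨fun h => hup h (Nat.sInf_mem hx.2), fun h => Nat.sInf_le h⟩
  rw [hone]
  refine ⟨fun h n hn => h _ fun i => le_add_of_nonneg_left (hn i), fun h n hn => ?_⟩
  have hn' : 0 ≤ n - evec s := fun i => sub_nonneg.mpr (by exact_mod_cast hn i)
  simpa only [sub_add_cancel] using h _ hn'

theorem crIdeal_le_maximalIdeal [IsLocalRing R] {i : Fin s} (hI : I i ≠ ⊤)
    (hx : ∀ i j, x i j ∈ I i) : crIdeal x ≤ maximalIdeal R := by
  rw [crIdeal, Ideal.span_le]
  rintro _ ⟨j, rfl⟩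
  exact le_maximalIdeal hI ((I i).mem_of_dvd
    (Finset.dvd_prod_of_mem (fun i => x i j) (Finset.mem_univ i)) (hx i j))

end CompleteReduction

end Filtration

section PolyDegree

/-- `PolyDegreeLE d f` says that `f` is a polynomial function of degree at most `d`, encoded as the
vanishing of all its iterated differences of order `d + 1`, in arbitrary directions. -/
def PolyDegreeLE {M A : Type*} [AddCommMonoid M] [AddCommGroup A] : ℕ → (M → A) → Prop
  | 0, f => ∀ u, Δ_[u] f = 0
  | d + 1, f => ∀ u, PolyDegreeLE d (Δ_[u] f)

namespace PolyDegreeLE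

section Module

variable {M A : Type*} [AddCommMonoid M] [AddCommGroup A] {d k : ℕ} {f g : M → A}

theorem zero (d : ℕ) : PolyDegreeLE d (0 : M → A) := by
  induction d with
  | zero => exact fun u => fwdDiff_const u 0
  | succ d ih => exact fun u => (fwdDiff_const u (0 : A)).symm ▸ ih

theorem const (d : ℕ) (a : A) : PolyDegreeLE d (fun _ : M => a) := by
  cases d with
  | zero => exact fun u => fwdDiff_const u a
  | succ d => exact fun u => (fwdDiff_const u a).symm ▸ zero d

theorem mono (hdk : d ≤ k) (hf : PolyDegreeLE d f) : PolyDegreeLE k f := by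
  induction k generalizing d f with
  | zero => rwa [Nat.le_zero.mp hdk] at hf
  | succ k ih =>
    cases d with
    | zero => exact fun u => (hf u).symm ▸ zero k
    | succ d => exact fun u => ih (Nat.le_of_succ_le_succ hdk) (hf u)

theorem add (hf : PolyDegreeLE d f) (hg : PolyDegreeLE d g) : PolyDegreeLE d (f + g) := by
  induction d generalizing f g with
  | zero => exact fun u => by rw [fwdDiff_add, hf u, hg u, add_zero]
  | succ d ih => exact fun u => by rw [fwdDiff_add]; exact ih (hf u) (hg u)

theorem neg (hf : PolyDegreeLE d f) : PolyDegreeLE d (-f) := by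
  have hneg (u : M) (f : M → A) : Δ_[u] (-f) = -Δ_[u] f := by
    ext n
    simp only [fwdDiff, Pi.neg_apply, neg_sub_neg, neg_sub]
  induction d generalizing f with
  | zero => exact fun u => by rw [hneg, hf u, neg_zero]
  | succ d ih => exact fun u => by rw [hneg]; exact ih (hf u)

theorem comp_add_right (hf : PolyDegreeLE d f) (a : M) : PolyDegreeLE d fun n => f (n + a) := by
  have hcomp (u : M) (f : M → A) : Δ_[u] (fun n => f (n + a)) = fun n => Δ_[u] f (n + a) := by
    ext n
    simp only [fwdDiff, add_right_comm]
  induction d generalizing f with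
  | zero => exact fun u => by rw [hcomp, hf u]; rfl
  | succ d ih => exact fun u => by rw [hcomp]; exact ih (hf u)

theorem comp_addMonoidHom {N : Type*} [AddCommMonoid N] (hf : PolyDegreeLE d f) (φ : N →+ M) :
    PolyDegreeLE d (f ∘ φ) := by
  have hcomp (u : N) (f : M → A) : Δ_[u] (f ∘ φ) = Δ_[φ u] f ∘ φ := by
    ext n
    simp only [fwdDiff, Function.comp_apply, map_add]
  induction d generalizing f with
  | zero => exact fun u => by rw [hcomp, hf (φ u)]; rfl
  | succ d ih => exact fun u => by rw [hcomp]; exact ih (hf (φ u))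

theorem eq_apply_zero (hf : PolyDegreeLE 0 f) (n : M) : f n = f 0 := by
  simpa [fwdDiff, sub_eq_zero] using congrFun (hf n) 0

theorem sum {ι : Type*} {t : Finset ι} {f : ι → M → A} (hf : ∀ i ∈ t, PolyDegreeLE d (f i)) :
    PolyDegreeLE d (∑ i ∈ t, f i) :=
  Finset.sum_induction f (PolyDegreeLE d) (fun _ _ => add) (zero d) hf

end Module

theorem of_fwdDiff_one {A : Type*} [AddCommGroup A] {d : ℕ} {f : ℤ → A}
    (hf : PolyDegreeLE d (Δ_[1] f)) : PolyDegreeLE (d + 1) f := by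
  intro u
  induction u with
  | zero =>
    have : Δ_[0] f = 0 := by ext n; simp [fwdDiff]
    exact this ▸ zero d
  | succ u ih =>
    have : Δ_[(u + 1 : ℤ)] f = Δ_[(u : ℤ)] f + fun n => Δ_[1] f (n + u) := by
      ext n; simp [fwdDiff, add_assoc]
    exact this ▸ ih.add (hf.comp_add_right _)
  | pred u ih =>
    have : Δ_[(-u - 1 : ℤ)] f = Δ_[(-u : ℤ)] f + -fun n => Δ_[1] f (n + (-u - 1)) := by
      ext n; simp [fwdDiff, add_assoc]
    exact this ▸ ih.add (hf.comp_add_right _).neg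

section Ring

variable {M A : Type*} [AddCommMonoid M] [CommRing A] {d k : ℕ} {f g : M → A}

theorem const_mul (hf : PolyDegreeLE d f) (a : A) : PolyDegreeLE d fun n => a * f n := by
  have hmul (u : M) (f : M → A) : Δ_[u] (fun n => a * f n) = fun n => a * Δ_[u] f n := by
    ext n
    simp only [fwdDiff, mul_sub]
  induction d generalizing f with
  | zero => exact fun u => by ext n; rw [hmul, hf u]; exact mul_zero a
  | succ d ih => exact fun u => by rw [hmul]; exact ih (hf u)

theorem mul (hf : PolyDegreeLE d f) (hg : PolyDegreeLE k g) : PolyDegreeLE (d + k) (f * g) := by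
  have mul_of_const {d : ℕ} {f g : M → A} (hf : PolyDegreeLE 0 f) (hg : PolyDegreeLE d g) :
      PolyDegreeLE d (f * g) := by
    have hfg : f * g = fun n => f 0 * g n := funext fun n => by rw [← hf.eq_apply_zero n]; rfl
    exact hfg ▸ hg.const_mul (f 0)
  have leibniz (u : M) (f g : M → A) :
      Δ_[u] (f * g) = Δ_[u] f * (fun n => g (n + u)) + f * Δ_[u] g := by
    ext n
    simp only [fwdDiff, Pi.add_apply, Pi.mul_apply]
    ring
  induction d generalizing k f g with
  | zero => exact (zero_add k).symm ▸ mul_of_const hf hg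
  | succ d ihd =>
    induction k generalizing f g with
    | zero => exact mul_comm f g ▸ mul_of_const hg hf
    | succ k ihk =>
      intro u
      rw [leibniz]
      have hdegree : d + (k + 1) = d + 1 + k := by ring
      exact (hdegree ▸ ihd (hf u) (hg.comp_add_right u)).add (ihk hf (hg u))

theorem prod {ι : Type*} {t : Finset ι} {f : ι → M → A} {d : ι → ℕ}
    (hf : ∀ i ∈ t, PolyDegreeLE (d i) (f i)) : PolyDegreeLE (∑ i ∈ t, d i) (∏ i ∈ t, f i) := by
  classical
  induction t using Finset.induction_on with
  | empty => exact const 0 1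
  | insert i t hi ih =>
    rw [Finset.sum_insert hi, Finset.prod_insert hi]
    exact (hf i (Finset.mem_insert_self i t)).mul
      (ih fun j hj => hf j (Finset.mem_insert_of_mem hj))

end Ring

theorem choose (k : ℕ) : PolyDegreeLE k fun n : ℤ => Ring.choose n k := by
  induction k with
  | zero => simpa only [Ring.choose_zero_right] using const 0 (1 : ℤ)
  | succ k ih =>
    refine of_fwdDiff_one ?_
    convert ih using 2 with n
    rw [fwdDiff, Ring.choose_succ_succ, add_sub_cancel_right]

end PolyDegreeLE

theorem polyDegreeLE_hilbPoly (s d : ℕ) (c : (Fin s → ℕ) → ℤ) :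
    PolyDegreeLE d (hilbPoly s d c) := by
  have hfactor (i : Fin s) (a : ℕ) :
      PolyDegreeLE a fun n : Fin s → ℤ => Ring.choose (n i + (a : ℤ) - 1) a := by
    simp only [add_sub_assoc]
    exact ((PolyDegreeLE.choose a).comp_add_right ((a : ℤ) - 1)).comp_addMonoidHom
      (Pi.evalAddMonoidHom (fun _ : Fin s => ℤ) i)
  have hsum := PolyDegreeLE.sum (t := univ.filter fun α : Fin s → Fin (d + 1) => ∑ i, (α i : ℕ) ≤ d)
    fun α hα => ((PolyDegreeLE.prod fun i _ => hfactor i (α i)).mono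
      (Finset.mem_filter.mp hα).2).const_mul
        ((-1) ^ (d - ∑ i, (α i : ℕ)) * c fun i => α i)
  refine (?_ : hilbPoly s d c = _) ▸ hsum
  ext n
  simp only [hilbPoly, Finset.sum_apply, Finset.prod_apply]

end PolyDegree

section HilbertFunction

variable {R : Type*} [CommRing R] [IsLocalRing R] [IsNoetherianRing R] {s : ℕ}
  {I : Fin s → Ideal R} {F : AdmissibleFiltration R s I} {x : Fin s → Fin 2 → R}
  {c : (Fin s → ℕ) → ℤ}

theorem lenI_quotient_crIdeal_mul (hdim : ringKrullDim R = 2) (hCM : IsCMLocal R)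
    (hI : ∀ i, maximalIdeal R ≤ (I i).radical) (hF : H1ReesVanishes F)
    (hx : IsCompleteReduction F x) {n : Fin s → ℤ} (hn : 0 ≤ n) :
    lenI R (R ⧸ crIdeal x * F.F (n + evec s)) + hilbFn F n =
      2 * hilbFn F (n + evec s) + lenI R (R ⧸ crIdeal x) := by
  have hrange : (Set.range fun j => ∏ i, x i j) = {∏ i, x i 0, ∏ i, x i 1} := by
    ext r
    simp [Fin.exists_fin_two, eq_comm]
  have hJ := hx.maximalIdeal_le_radical hI
  have hcolon := hx.colon_eq hF hn
  rw [crIdeal, hrange] at hJ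
  rw [hrange] at hcolon
  rw [crIdeal, hrange, hilbFn, ← hcolon]
  exact lenI_quotient_span_pair_mul (hCM.koszulExact hdim hJ) hJ (F.maximalIdeal_le_radical hI _)

theorem crIdeal_mul_eq_iff_fwdDiff_fwdDiff_hilbFn (hdim : ringKrullDim R = 2) (hCM : IsCMLocal R)
    (hI : ∀ i, maximalIdeal R ≤ (I i).radical) (hF : H1ReesVanishes F)
    (hx : IsCompleteReduction F x) {n : Fin s → ℤ} (hn : 0 ≤ n) :
    crIdeal x * F.F (n + evec s) = F.F (n + evec s + evec s) ↔
      Δ_[evec s] (Δ_[evec s] (hilbFn F)) n = lenI R (R ⧸ crIdeal x) := by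
  have hlen := lenI_quotient_crIdeal_mul hdim hCM hI hF hx hn
  have hrad : maximalIdeal R ≤ (crIdeal x * F.F (n + evec s)).radical := by
    rw [Ideal.radical_mul]
    exact le_inf (hx.maximalIdeal_le_radical hI) (F.maximalIdeal_le_radical hI _)
  have heq : crIdeal x * F.F (n + evec s) = F.F (n + evec s + evec s) ↔
      lenI R (R ⧸ crIdeal x * F.F (n + evec s)) = hilbFn F (n + evec s + evec s) :=
    ⟨fun h => by rw [h, hilbFn],
      fun h => eq_of_le_of_lenI_quotient_le (crIdeal_mul_le F hx.1 _) hrad h.le⟩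
  rw [heq]
  simp only [fwdDiff]
  constructor <;> intro h <;> linarith

theorem fwdDiff_fwdDiff_hilbPoly (hdim : ringKrullDim R = 2) (hCM : IsCMLocal R)
    (hI : ∀ i, maximalIdeal R ≤ (I i).radical) (hF : H1ReesVanishes F)
    (hc : IsHilbCoeffs F 2 c) (hx : IsCompleteReduction F x) (n : Fin s → ℤ) :
    Δ_[evec s] (Δ_[evec s] (hilbPoly s 2 c)) n = lenI R (R ⧸ crIdeal x) := by
  have hconst := (polyDegreeLE_hilbPoly s 2 c (evec s) (evec s)).eq_apply_zero
  obtain ⟨m, hm, hJm, hP⟩ := ((eventually_ge_atTop 0).and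
    ((eventually_atTop_add_right hx.eventually_crIdeal_mul (evec s)).and
      (eventually_forall_ge_atTop.mpr hc.eventually_hilbFn_eq))).exists
  have hm₁ := le_add_of_nonneg_right (a := m) (evec_nonneg s)
  have hm₂ := hm₁.trans (le_add_of_nonneg_right (evec_nonneg s))
  rw [hconst n, ← hconst m,
    ← (crIdeal_mul_eq_iff_fwdDiff_fwdDiff_hilbFn hdim hCM hI hF hx hm).mp hJm]
  simp only [fwdDiff, hP m le_rfl, hP _ hm₁, hP _ hm₂]

theorem forall_hilbFn_eq_hilbPoly_iff (hdim : ringKrullDim R = 2) (hCM : IsCMLocal R)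
    (hI : ∀ i, maximalIdeal R ≤ (I i).radical) (hF : H1ReesVanishes F)
    (hc : IsHilbCoeffs F 2 c) (hx : IsCompleteReduction F x) :
    (∀ n, 0 ≤ n → hilbFn F n = hilbPoly s 2 c n) ↔ crNumber F x ≤ 1 := by
  have hΔP := fwdDiff_fwdDiff_hilbPoly hdim hCM hI hF hc hx
  rw [hx.crNumber_le_one_iff]
  constructor
  · intro h n hn
    have hn₁ := add_nonneg hn (evec_nonneg s)
    rw [crIdeal_mul_eq_iff_fwdDiff_fwdDiff_hilbFn hdim hCM hI hF hx hn, ← hΔP n]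
    simp only [fwdDiff, h n hn, h _ hn₁, h _ (add_nonneg hn₁ (evec_nonneg s))]
  · intro h n hn
    have hzero : ∀ᶠ n in atTop, (hilbFn F - hilbPoly s 2 c) n = 0 :=
      hc.eventually_hilbFn_eq.mono fun n => sub_eq_zero.mpr
    have hΔzero : ∀ᶠ n in atTop, Δ_[evec s] (hilbFn F - hilbPoly s 2 c) n = 0 := by
      filter_upwards [hzero, eventually_atTop_add_right hzero (evec s)] with n hn hn'
      rw [fwdDiff, hn, hn', sub_zero]
    refine sub_eq_zero.mp (eq_zero_of_eventually_of_fwdDiff_evec_eq_zero hzero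
      (fun n hn => eq_zero_of_eventually_of_fwdDiff_evec_eq_zero hΔzero (fun n hn => ?_) hn) hn)
    have hΔH := (crIdeal_mul_eq_iff_fwdDiff_fwdDiff_hilbFn hdim hCM hI hF hx hn).mp (h n hn)
    have hHP := hΔH.trans (hΔP n).symm
    simp only [fwdDiff, Pi.sub_apply] at hHP ⊢
    linarith

end HilbertFunction

section SecondDifference

theorem fwdDiff_comm {M A : Type*} [AddCommMonoid M] [AddCommGroup A] (u v : M) (f : M → A) :
    Δ_[u] (Δ_[v] f) = Δ_[v] (Δ_[u] f) := by
  ext n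
  simp only [fwdDiff, add_right_comm n u v]
  abel

theorem PolyDegreeLE.fwdDiff_nsmul {M A : Type*} [AddCommMonoid M] [AddCommGroup A] {f : M → A}
    (hf : PolyDegreeLE 1 f) (k : ℕ) (u n : M) : Δ_[k • u] f n = k • Δ_[u] f n := by
  induction k with
  | zero => simp [fwdDiff]
  | succ k ih =>
    have hconst : Δ_[u] f (n + k • u) = Δ_[u] f n :=
      ((hf u).eq_apply_zero _).trans ((hf u).eq_apply_zero n).symm
    rw [succ_nsmul, succ_nsmul, ← ih, ← hconst]
    simp only [fwdDiff, add_assoc]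
    abel

theorem PolyDegreeLE.fwdDiff_nonneg {M : Type*} [AddCommGroup M] [PartialOrder M]
    [IsOrderedAddMonoid M] [IsDirectedOrder M] [Nonempty M] {f : M → ℤ} (hf : PolyDegreeLE 1 f)
    (hnonneg : ∀ᶠ n in atTop, 0 ≤ f n) {u : M} (hu : 0 ≤ u) (n : M) : 0 ≤ Δ_[u] f n := by
  obtain ⟨m, hm⟩ := (eventually_forall_ge_atTop.mpr hnonneg).exists
  rw [(hf u).eq_apply_zero n, ← (hf u).eq_apply_zero m]
  by_contra! hneg
  have hline := hm (m + ((f m).toNat + 1) • u) (le_add_of_nonneg_right (nsmul_nonneg hu _))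
  have hslope := hf.fwdDiff_nsmul ((f m).toNat + 1) u m
  rw [fwdDiff, nsmul_eq_mul] at hslope
  push_cast at hslope
  have := Int.self_le_toNat (f m)
  nlinarith

variable {R : Type*} [CommRing R] [IsLocalRing R] [IsNoetherianRing R] {s : ℕ}
  {I : Fin s → Ideal R} {F : AdmissibleFiltration R s I} {x : Fin s → Fin 2 → R}
  {c : (Fin s → ℕ) → ℤ}

theorem exists_eventually_hilbFn_add_le (hI : ∀ i, maximalIdeal R ≤ (I i).radical)
    (hI' : ∀ i, I i ≤ maximalIdeal R) {a : Fin s → ℤ} (ha : 0 ≤ a) (i : Fin s) :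
    ∃ k : ℕ, ∀ᶠ n in atTop, hilbFn F (n + a) ≤ hilbFn F (n + k • Pi.single i 1) := by
  obtain ⟨k, hk⟩ := Ideal.exists_pow_le_of_le_radical_of_fg
    (maximalIdeal_le_radical_prodPow hI a) (maximalIdeal R).fg_of_isNoetherianRing
  refine ⟨k, F.eventually_forall_F_add.mono fun n hn => ?_⟩
  have hpow : prodPow I (k • Pi.single i 1) = I i ^ k := by
    rw [← Pi.single_smul, prodPow, Finset.prod_eq_single i] <;> simp +contextual
  have hsingle : (0 : Fin s → ℤ) ≤ k • Pi.single i 1 :=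
    nsmul_nonneg (Pi.single_nonneg.mpr zero_le_one) k
  refine lenI_quotient_anti ?_ (F.maximalIdeal_le_radical hI _)
  rw [hn a ha, hn _ hsingle, hpow]
  exact Ideal.mul_mono_left ((Ideal.pow_right_mono (hI' i) k).trans hk)

theorem exists_fwdDiff_fwdDiff_hilbPoly_le (hI : ∀ i, maximalIdeal R ≤ (I i).radical)
    (hI' : ∀ i, I i ≤ maximalIdeal R) (hc : IsHilbCoeffs F 2 c) {a u : Fin s → ℤ} (ha : 0 ≤ a)
    (hu : 0 ≤ u) (i : Fin s) :
    ∃ k : ℕ, ∀ n, Δ_[a] (Δ_[u] (hilbPoly s 2 c)) n ≤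
      k * Δ_[Pi.single i 1] (Δ_[u] (hilbPoly s 2 c)) n := by
  obtain ⟨k, hk⟩ := exists_eventually_hilbFn_add_le (F := F) hI hI' ha i
  have hP := polyDegreeLE_hilbPoly s 2 c
  refine ⟨k, fun n => ?_⟩
  let w : Fin s → ℤ := k • Pi.single i 1
  have hkw : Δ_[w] (Δ_[u] (hilbPoly s 2 c)) n =
      k * Δ_[Pi.single i 1] (Δ_[u] (hilbPoly s 2 c)) n := by
    rw [(hP u).fwdDiff_nsmul, nsmul_eq_mul]
  have hnonneg : ∀ᶠ n in atTop, 0 ≤ (Δ_[w] (hilbPoly s 2 c) + -Δ_[a] (hilbPoly s 2 c)) n := by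
    have hHP := hc.eventually_hilbFn_eq
    filter_upwards [hk, eventually_atTop_add_right hHP a, eventually_atTop_add_right hHP w]
      with n hle hna hnw
    simp only [Pi.add_apply, Pi.neg_apply, fwdDiff, ← hna, ← hnw]
    linarith
  have hmono := ((hP w).add (hP a).neg).fwdDiff_nonneg hnonneg hu n
  rw [← hkw, fwdDiff_comm a u, fwdDiff_comm w u]
  simp only [fwdDiff, Pi.add_apply, Pi.neg_apply] at hmono ⊢
  linarith

theorem fwdDiff_single_fwdDiff_single_hilbPoly_pos (hdim : ringKrullDim R = 2) (hCM : IsCMLocal R)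
    (hI : ∀ i, IsMPrimary R (I i)) (hF : H1ReesVanishes F) (hc : IsHilbCoeffs F 2 c)
    (hx : IsCompleteReduction F x) (i j : Fin s) (n : Fin s → ℤ) :
    0 < Δ_[Pi.single i 1] (Δ_[Pi.single j 1] (hilbPoly s 2 c)) n := by
  have hrad (i : Fin s) := (hI i).2
  have hle (i : Fin s) := le_maximalIdeal (hI i).1
  have hpos : 0 < Δ_[evec s] (Δ_[evec s] (hilbPoly s 2 c)) n := by
    rw [fwdDiff_fwdDiff_hilbPoly hdim hCM hrad hF hc hx]
    exact lenI_quotient_pos (hx.maximalIdeal_le_radical hrad)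
      (ne_top_of_le_ne_top Ideal.IsPrime.ne_top' (crIdeal_le_maximalIdeal (hI i).1 hx.1))
  obtain ⟨k, hk⟩ := exists_fwdDiff_fwdDiff_hilbPoly_le hrad hle hc (evec_nonneg s)
    (evec_nonneg s) j
  have hsingle : (0 : Fin s → ℤ) ≤ Pi.single j 1 := Pi.single_nonneg.mpr zero_le_one
  obtain ⟨l, hl⟩ := exists_fwdDiff_fwdDiff_hilbPoly_le hrad hle hc (evec_nonneg s) hsingle i
  have hj := pos_of_mul_pos_right (hpos.trans_le (hk n)) (Int.natCast_nonneg k)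
  rw [fwdDiff_comm] at hj
  exact pos_of_mul_pos_right (hj.trans_le (hl n)) (Int.natCast_nonneg l)

theorem postSet_subset_nonneg (hs : 2 ≤ s) (hdim : ringKrullDim R = 2) (hCM : IsCMLocal R)
    (hI : ∀ i, IsMPrimary R (I i)) (hF : H1ReesVanishes F) (hc : IsHilbCoeffs F 2 c)
    (hx : IsCompleteReduction F x) : postSet F 2 c ⊆ {n | 0 ≤ n} := by
  intro n hn i
  by_contra! hi
  have : Nontrivial (Fin s) := Fin.nontrivial_iff_two_le.mpr hs
  obtain ⟨j, hji⟩ := exists_ne i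
  let m : Fin s → ℤ := Function.update n i (-1)
  have hnm : n ≤ m := le_update_self_iff.mpr (Int.le_sub_one_of_lt hi)
  have hmi : m i = -1 := Function.update_self ..
  have hmji : (m + Pi.single j 1 : Fin s → ℤ) i = -1 := by simp [hmi, hji.symm]
  have hle (k : Fin s) (m : Fin s → ℤ) : m ≤ m + Pi.single k 1 :=
    le_add_of_nonneg_right (Pi.single_nonneg.mpr zero_le_one)
  have hpos := fwdDiff_single_fwdDiff_single_hilbPoly_pos hdim hCM hI hF hc hx j i m
  simp only [fwdDiff, ← hn m hnm, ← hn _ (hnm.trans (hle i m)), ← hn _ (hnm.trans (hle j m)),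
    ← hn _ (hnm.trans ((hle j m).trans (hle i _))), hilbFn_add_single_of_eq_neg_one hmi,
    hilbFn_add_single_of_eq_neg_one hmji, sub_self, lt_self_iff_false] at hpos

theorem postSet_eq_iff_crNumber_le_one (hs : 2 ≤ s) (hdim : ringKrullDim R = 2)
    (hCM : IsCMLocal R) (hI : ∀ i, IsMPrimary R (I i)) (hF : H1ReesVanishes F)
    (hc : IsHilbCoeffs F 2 c) (hx : IsCompleteReduction F x) :
    postSet F 2 c = {n | 0 ≤ n} ↔ crNumber F x ≤ 1 := by
  rw [← forall_hilbFn_eq_hilbPoly_iff hdim hCM (fun i => (hI i).2) hF hc hx]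
  constructor
  · intro h
    exact (h.ge (le_refl (0 : Fin s → ℤ)) : (0 : Fin s → ℤ) ∈ postSet F 2 c)
  · exact fun h => (postSet_subset_nonneg hs hdim hCM hI hF hc hx).antisymm
      fun n hn m hnm => h m (hn.trans hnm)

end SecondDifference

section Superficial

theorem exists_forall_notMem_of_ne_top {R M : Type*} [CommRing R] [IsLocalRing R]
    [Infinite (ResidueField R)] [AddCommGroup M] [Module R M] {T : Set (Submodule R M)}
    (hT : T.Finite) (h : ∀ U ∈ T, U ≠ ⊤) : ∃ v, ∀ U ∈ T, v ∉ U := by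
  by_contra! hcover
  obtain ⟨U, hU, hfinite⟩ := Submodule.exists_finiteIndex_of_cover (s := hT.toFinset) (p := id)
    (Set.eq_univ_of_forall fun v => by simpa using hcover v)
  have : U.toAddSubgroup.FiniteIndex := hfinite
  have : Finite (M ⧸ U) := AddSubgroup.finite_quotient_of_finiteIndex
  have : Nontrivial (M ⧸ U) := Submodule.Quotient.nontrivial_iff.mpr (h U (hT.mem_toFinset.mp hU))
  obtain ⟨z, hz⟩ := exists_ne (0 : M ⧸ U)
  let φ := LinearMap.toSpanSingleton R (M ⧸ U) z
  have hker : LinearMap.ker φ ≤ maximalIdeal R :=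
    le_maximalIdeal fun htop => hz (by
      simpa [φ] using (htop ▸ Submodule.mem_top : (1 : R) ∈ LinearMap.ker φ))
  have : Finite (R ⧸ LinearMap.ker φ) :=
    Finite.of_equiv _ φ.quotKerEquivRange.toEquiv.symm
  have : Finite (ResidueField R) :=
    Finite.of_surjective _ (Ideal.Quotient.factor_surjective hker)
  exact not_finite (ResidueField R)

variable {A : Type*} [CommRing A] [IsNoetherianRing A]

theorem exists_forall_mem_pow_smul_top_eq_zero {Q : Type*} [AddCommGroup Q] [Module A Q]
    [Module.Finite A Q] {𝔞 : Ideal A} {x : A} (hx : ∀ P ∈ associatedPrimes A Q, x ∈ P → 𝔞 ≤ P) :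
    ∃ c : ℕ, ∀ k ≥ c, ∀ q ∈ (𝔞 ^ k • ⊤ : Submodule A Q), x • q = 0 → q = 0 := by
  let N : Submodule A Q := LinearMap.ker (LinearMap.lsmul A Q x)
  have hxN : x ∈ Module.annihilator A N :=
    Module.mem_annihilator.mpr fun q => Subtype.ext q.2
  have hrad : 𝔞 ≤ (Module.annihilator A N).radical := by
    rw [← Ideal.sInf_minimalPrimes]
    refine le_sInf fun P hP => ?_
    have hPN := Module.associatedPrimes.minimalPrimes_annihilator_subset_associatedPrimes A N hP
    exact hx P (associatedPrimes.subset_of_injective N.injective_subtype hPN)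
      (hPN.annihilator_le (Submodule.annihilator_top.ge hxN))
  obtain ⟨k, hk⟩ := Ideal.exists_pow_le_of_le_radical_of_fg hrad (IsNoetherian.noetherian _)
  obtain ⟨c, hc⟩ := Ideal.exists_pow_inf_eq_pow_smul 𝔞 N
  have hbot : 𝔞 ^ k • N = ⊥ := eq_bot_iff.mpr <| Submodule.smul_le.mpr fun r hr q hq =>
    congrArg Subtype.val (Module.mem_annihilator.mp (hk hr) ⟨q, hq⟩)
  refine ⟨k + c, fun n hn q hq hxq => ?_⟩
  have hqN : q ∈ 𝔞 ^ (n - c) • (𝔞 ^ c • ⊤ ⊓ N) :=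
    hc n (le_of_add_le_right hn) ▸ ⟨hq, LinearMap.mem_ker.mpr hxq⟩
  exact (Submodule.mem_bot A).mp <| hbot ▸
    Submodule.smul_mono (Ideal.pow_le_pow_right (le_tsub_of_add_le_right hn)) inf_le_right hqN

theorem exists_mem_forall_mem_pow_smul {R S : Type*} [CommRing R] [IsLocalRing R]
    [Infinite (ResidueField R)] [Algebra R A] [AddCommGroup S] [Module A S] (L : Submodule R A)
    {M : Submodule A S} (hM : M.FG) (G : Submodule A S) :
    ∃ x ∈ L, ∃ c : ℕ, ∀ k ≥ c, ∀ q ∈ Ideal.span (L : Set A) ^ k • M, x • q ∈ G → q ∈ G := by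
  let Q := M ⧸ G.submoduleOf M
  let π : M →ₗ[A] Q := (G.submoduleOf M).mkQ
  have hπ (q : M) : π q = 0 ↔ (q : S) ∈ G := Submodule.Quotient.mk_eq_zero _
  have : Module.Finite A M := Module.Finite.iff_fg.mpr hM
  let T : Set (Submodule R L) := (fun P : Ideal A => (P.restrictScalars R).submoduleOf L) ''
    {P ∈ associatedPrimes A Q | ¬ Ideal.span (L : Set A) ≤ P}
  have hT : T.Finite := ((associatedPrimes.finite A Q).subset (Set.sep_subset _ _)).image _
  obtain ⟨x, hx⟩ := exists_forall_notMem_of_ne_top hT (by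
    rintro _ ⟨P, ⟨-, hP⟩, rfl⟩ htop
    exact hP (Ideal.span_le.mpr (Submodule.submoduleOf_eq_top.mp htop)))
  obtain ⟨c, hc⟩ := exists_forall_mem_pow_smul_top_eq_zero (Q := Q)
    (𝔞 := Ideal.span (L : Set A)) (x := x) fun P hP hxP => by
      by_contra hLP
      exact hx _ ⟨P, ⟨hP, hLP⟩, rfl⟩ hxP
  refine ⟨x, x.2, c, fun k hk q hq hxq => ?_⟩
  have hqM : q ∈ M := Submodule.smul_le_right hq
  have hqtop : (⟨q, hqM⟩ : M) ∈ (Ideal.span (L : Set A) ^ k • ⊤ : Submodule A M) := by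
    rwa [Submodule.mem_smul_top_iff]
  have hmk : π ⟨q, hqM⟩ ∈ (Ideal.span (L : Set A) ^ k • ⊤ : Submodule A Q) := by
    rw [← LinearMap.range_eq_top.mpr (Submodule.mkQ_surjective (G.submoduleOf M)),
      LinearMap.range_eq_map, ← Submodule.map_smul'']
    exact Submodule.mem_map_of_mem hqtop
  exact (hπ _).mp (hc k hk _ hmk (by rwa [← map_smul, hπ]))

end Superficial

theorem forall_ge_of_add_single {ι : Type*} [Finite ι] [DecidableEq ι] {m : ι → ℤ}
    {p : (ι → ℤ) → Prop} (base : p m) (step : ∀ n ≥ m, ∀ j, p n → p (n + Pi.single j 1)) :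
    ∀ n ≥ m, p n := by
  cases nonempty_fintype ι
  intro n hn
  induction hk : ∑ j, (n j - m j).toNat generalizing n with
  | zero =>
    have hmn : n = m := le_antisymm (fun j => by
      have := Finset.sum_eq_zero_iff.mp hk j (Finset.mem_univ j)
      lia) hn
    rwa [hmn]
  | succ k ih =>
    obtain ⟨j, -, hj⟩ := Finset.exists_ne_zero_of_sum_ne_zero (hk.trans_ne k.succ_ne_zero)
    have hle : m ≤ n - (Pi.single j 1 : ι → ℤ) := fun l => by
      have := hn l
      obtain rfl | hl := eq_or_ne l j
      · simp
        lia
      · simpa [hl] using this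
    have hsum : ∑ l, (n l - m l).toNat =
        ∑ l, ((n - Pi.single j 1 : ι → ℤ) l - m l).toNat + ∑ l, (Pi.single j 1 : ι → ℕ) l := by
      rw [← Finset.sum_add_distrib]
      refine Finset.sum_congr rfl fun l _ => ?_
      obtain rfl | hl := eq_or_ne l j
      · simp
        lia
      · simp [hl]
    rw [hk, Finset.sum_pi_single', if_pos (Finset.mem_univ j), Nat.add_right_cancel_iff] at hsum
    rw [← sub_add_cancel n (Pi.single j 1)]
    exact step _ hle j (ih _ hle hsum.symm)

section MultiRees

open AddMonoidAlgebra

variable {ι R : Type*} [DecidableEq ι] [CommRing R]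

/-- The multi-Rees algebra `R[I₁t₁, …, I_st_s]`, as a subalgebra of the Laurent polynomial ring
(the group algebra of `ℤ^ι`), which also accommodates filtrations indexed by `ℤ^ι`. -/
noncomputable def multiRees (I : ι → Ideal R) : Subalgebra R R[ι → ℤ] :=
  Algebra.adjoin R (⋃ i, single (Pi.single i 1 : ι → ℤ) '' (I i))

namespace multiRees

variable {I : ι → Ideal R}

theorem single_mem {i : ι} {u : R} (hu : u ∈ I i) : single (Pi.single i 1) u ∈ multiRees I :=
  Algebra.subset_adjoin (Set.mem_iUnion_of_mem i (Set.mem_image_of_mem _ hu))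

instance [Finite ι] [IsNoetherianRing R] : IsNoetherianRing (multiRees I) := by
  cases nonempty_fintype ι
  choose t ht using fun i => (IsNoetherian.noetherian (I i)).map
    (lsingle (R := R) (Pi.single i 1 : ι → ℤ))
  refine isNoetherianRing_of_fg (Subalgebra.fg_def.mpr
    ⟨⋃ i, t i, Set.finite_iUnion fun i => (t i).finite_toSet, ?_⟩)
  have hspan (i : ι) : Algebra.adjoin R (t i : Set R[ι → ℤ]) =
      Algebra.adjoin R (single (Pi.single i 1 : ι → ℤ) '' (I i)) := by
    rw [← Algebra.adjoin_span, ht]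
    rfl
  simp only [multiRees, Algebra.adjoin_iUnion, hspan]

/-- The elements `∑ gₙtⁿ` with `gₙ ∈ G n`, as a module over the multi-Rees algebra. It encodes a
filtration so that Noetherianity of the algebra applies to it. -/
noncomputable def gradedModule (I : ι → Ideal R) (G : (ι → ℤ) → Ideal R)
    (hG : ∀ i n, I i * G n ≤ G (n + Pi.single i 1)) : Submodule (multiRees I) R[ι → ℤ] where
  carrier := {f | ∀ n, f.coeff n ∈ G n}
  add_mem' hf hg n := add_mem (hf n) (hg n)
  zero_mem' n := zero_mem (G n)
  smul_mem' := by
    rintro ⟨a, ha⟩ f hf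
    change ∀ n, (a * f).coeff n ∈ G n
    rw [multiRees] at ha
    induction ha using Algebra.adjoin_induction generalizing f with
    | mem a ha =>
      intro n
      obtain ⟨i, u, hu, rfl⟩ := Set.mem_iUnion.mp ha
      have huf := hG i _ (Ideal.mul_mem_mul hu (hf (-Pi.single i 1 + n)))
      rwa [neg_add_cancel_comm, ← coeff_single_mul_apply] at huf
    | algebraMap r =>
      intro n
      simpa [← Algebra.smul_def] using (G n).mul_mem_left r (hf n)
    | add a b _ _ iha ihb =>
      intro n
      simpa [add_mul] using add_mem (iha hf n) (ihb hf n)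
    | mul a b _ _ iha ihb =>
      simpa only [mul_assoc] using iha (ihb hf)

theorem single_mem_gradedModule {G : (ι → ℤ) → Ideal R}
    {hG : ∀ i n, I i * G n ≤ G (n + Pi.single i 1)} {n : ι → ℤ} {f : R} :
    single n f ∈ gradedModule I G hG ↔ f ∈ G n := by
  refine ⟨fun h => by simpa using h n, fun hf k => ?_⟩
  obtain rfl | hk := eq_or_ne n k
  · simpa using hf
  · simp [Finsupp.single_eq_of_ne' hk]

/-- The degree-`eᵢ` component `Iᵢtᵢ` of the multi-Rees algebra. -/
noncomputable def degreePart (I : ι → Ideal R) (i : ι) : Submodule R (multiRees I) :=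
  Submodule.comap (multiRees I).val.toLinearMap
    (Submodule.map (lsingle (Pi.single i 1 : ι → ℤ)) (I i))

theorem single_mem_pow_smul [Finite ι] {F : (ι → ℤ) → Ideal R} {m : ι → ℤ}
    (hF : ∀ n ≥ m, ∀ j, F (n + Pi.single j 1) ≤ I j * F n)
    {M : Submodule (multiRees I) R[ι → ℤ]} (hM : ∀ f ∈ F m, single m f ∈ M) (i : ι) :
    ∀ n ≥ m, ∀ f ∈ F n,
      single n f ∈ Ideal.span (degreePart I i : Set (multiRees I)) ^ (n i - m i).toNat • M := by
  refine forall_ge_of_add_single (by simpa using hM) fun n hn j ih f hf => ?_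
  refine Submodule.mul_induction_on (hF n hn j hf) (fun u hu g hg => ?_) fun a b ha hb => by
    simpa only [single_add] using add_mem ha hb
  have hsmul : single (n + Pi.single j 1) (u * g) =
      (⟨_, single_mem hu⟩ : multiRees I) • single n g := by
    rw [Subalgebra.smul_def, smul_eq_mul, single_mul_single, add_comm]
  rw [hsmul]
  obtain rfl | hj := eq_or_ne j i
  · have hexp : ((n + Pi.single j 1 : ι → ℤ) j - m j).toNat = 1 + (n j - m j).toNat := by
      have := hn j
      simp
      lia
    rw [hexp, pow_add, pow_one, Submodule.mul_smul]
    exact Submodule.smul_mem_smul (Submodule.subset_span (Submodule.mem_map_of_mem hu)) (ih g hg)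
  · simpa [hj.symm] using Submodule.smul_mem _ _ (ih g hg)

end multiRees

theorem exists_mem_forall_mul_mem [Finite ι] [IsLocalRing R] [IsNoetherianRing R]
    [Infinite (ResidueField R)] {I : ι → Ideal R} {F G : (ι → ℤ) → Ideal R} {m : ι → ℤ}
    (hF : ∀ n ≥ m, ∀ j, F (n + Pi.single j 1) ≤ I j * F n)
    (hG : ∀ j n, I j * G n ≤ G (n + Pi.single j 1)) (i : ι) :
    ∃ x ∈ I i, ∃ c : ℤ, ∀ n ≥ m, c ≤ n i → ∀ f ∈ F n, x * f ∈ G (n + Pi.single i 1) → f ∈ G n := by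
  let M : Submodule (multiRees I) R[ι → ℤ] :=
    Submodule.span _ (Submodule.map (lsingle (R := R) m) (F m) : Set R[ι → ℤ])
  have hM : M.FG := by
    obtain ⟨t, ht⟩ := (IsNoetherian.noetherian (F m)).map (lsingle (R := R) m)
    exact ⟨t, by simp only [M, ← ht, Submodule.span_span_of_tower]⟩
  obtain ⟨x, ⟨r, hr, hrx⟩, c, hc⟩ :=
    exists_mem_forall_mem_pow_smul (multiRees.degreePart I i) hM (multiRees.gradedModule I G hG)
  refine ⟨r, hr, m i + c, fun n hn hcn f hf hrf => ?_⟩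
  have hxf : x • single n f = single (n + Pi.single i 1) (r * f) := by
    rw [Subalgebra.smul_def, smul_eq_mul, ← Subalgebra.coe_val, ← AlgHom.toLinearMap_apply, ← hrx,
      lsingle_apply, single_mul_single, add_comm]
  refine multiRees.single_mem_gradedModule.mp
    (hc _ (by lia) _ (multiRees.single_mem_pow_smul hF (fun f hf => ?_) i n hn f hf) ?_)
  · exact Submodule.subset_span (Submodule.mem_map_of_mem hf)
  · rw [hxf]
    exact multiRees.single_mem_gradedModule.mpr hrf

end MultiRees

section Colon

variable {R : Type*} [CommRing R]

theorem inf_span_singleton_eq_mul {J K : Ideal R} {y : R} (h : K.colon {y} = J) :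
    K ⊓ Ideal.span {y} = Ideal.span {y} * J := by
  ext r
  rw [Ideal.mem_inf, Ideal.mem_span_singleton', Ideal.mem_span_singleton_mul, ← h]
  constructor
  · rintro ⟨hr, t, rfl⟩
    exact ⟨t, Submodule.mem_colon_singleton.mpr hr, mul_comm y t⟩
  · rintro ⟨t, ht, rfl⟩
    exact ⟨mul_comm t y ▸ Submodule.mem_colon_singleton.mp ht, t, mul_comm t y⟩

theorem sup_inf_colon_singleton_eq {A B C K : Ideal R} {x : R} (hBA : B ≤ A)
    (hBC : Ideal.span {x} * B ≤ C) (h : ∀ f ∈ A, x * f ∈ C ⊔ K → f ∈ B ⊔ K) :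
    (A ⊔ K) ⊓ (C ⊔ K).colon {x} = B ⊔ K := by
  have hmem (r : R) : r ∈ (C ⊔ K).colon {x} ↔ x * r ∈ C ⊔ K := by
    rw [Submodule.mem_colon_singleton, smul_eq_mul, mul_comm]
  have hK : K ≤ (C ⊔ K).colon {x} := fun r hr =>
    (hmem r).mpr (Ideal.mul_mem_left _ x (Ideal.mem_sup_right hr))
  have hB : B ≤ (C ⊔ K).colon {x} := fun r hr =>
    (hmem r).mpr (Ideal.mem_sup_left (Ideal.span_singleton_mul_le_iff.mp hBC r hr))
  refine le_antisymm ?_ (le_inf (sup_le_sup_right hBA K) (sup_le hB hK))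
  rw [sup_comm, sup_inf_assoc_of_le A hK]
  exact sup_le le_sup_right fun f hf => h f hf.1 ((hmem f).mp hf.2)

variable [IsLocalRing R] [IsNoetherianRing R]

theorem lenI_quotient_add_lenI_quotient {A C : Ideal R} (hA : maximalIdeal R ≤ A.radical)
    (hC : maximalIdeal R ≤ C.radical) (x : R) :
    lenI R (R ⧸ C) + lenI R (R ⧸ A) =
      lenI R (R ⧸ A ⊓ C.colon {x}) + lenI R (R ⧸ Ideal.span {x} * A ⊔ C) := by
  have hlen := length_quotient_add_length_quotient (LinearMap.mulRight R x) A C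
  have hcolon : Submodule.comap (LinearMap.mulRight R x) C = C.colon {x} := by
    ext r
    simp [Submodule.mem_colon_singleton]
  have hmap : Submodule.map (LinearMap.mulRight R x) A = Ideal.span {x} * A := by
    ext r
    simp [Ideal.mem_span_singleton_mul, mul_comm x]
  rw [hcolon, hmap] at hlen
  have hCx : C ≤ C.colon {x} := fun r hr =>
    Submodule.mem_colon_singleton.mpr (C.mul_mem_right x hr)
  have hAC : maximalIdeal R ≤ (A ⊓ C.colon {x}).radical := by
    rw [Ideal.radical_inf]
    exact le_inf hA (hC.trans (Ideal.radical_mono hCx))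
  obtain ⟨a, ha, ha'⟩ := exists_length_quotient_eq_coe hA
  obtain ⟨b, hb, hb'⟩ := exists_length_quotient_eq_coe hC
  obtain ⟨k, hk, hk'⟩ := exists_length_quotient_eq_coe hAC
  obtain ⟨l, hl, hl'⟩ := exists_length_quotient_eq_coe
    (hC.trans (Ideal.radical_mono (le_sup_right : C ≤ Ideal.span {x} * A ⊔ C)))
  rw [ha, hb, hk, hl] at hlen
  rw [ha', hb', hk', hl']
  exact_mod_cast hlen

theorem lenI_quotient_sup_span_singleton {C : Ideal R} (hC : maximalIdeal R ≤ C.radical) (y : R) :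
    lenI R (R ⧸ C ⊔ Ideal.span {y}) = lenI R (R ⧸ C) - lenI R (R ⧸ C.colon {y}) := by
  have hlen := lenI_quotient_add_lenI_quotient (A := ⊤) (by simp [Ideal.radical_top]) hC y
  have htop : lenI R (R ⧸ (⊤ : Ideal R)) = 0 := by
    rw [lenI_eq_toNat_length, Module.length_eq_zero]
    rfl
  rw [htop, add_zero, top_inf_eq, Ideal.mul_top, sup_comm] at hlen
  exact eq_sub_of_add_eq' hlen.symm

end Colon

section GoodReduction

variable {R : Type*} [CommRing R] {s : ℕ} {I : Fin s → Ideal R} {F : AdmissibleFiltration R s I}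

theorem H1ReesVanishes.mem_of_mul_mem (hF : H1ReesVanishes F) {x : R} {i : Fin s}
    (hx : ∀ᶠ n in atTop, ∀ f ∈ F.F n,
      x * f ∈ F.F (n + Pi.single i 1 + evec s) → f ∈ F.F (n + evec s))
    {n : Fin s → ℤ} (hn : 0 ≤ n) {r : R} (hr : x * r ∈ F.F (n + Pi.single i 1)) : r ∈ F.F n := by
  obtain ⟨p, hp⟩ := eventually_atTop_iff_exists_nat.mp (eventually_ge_atTop n)
  have hnp : n ≤ p • evec s := hp _ fun i => by simp [evec]
  refine hF.mem_of_eventually_mul_mem hn ?_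
  filter_upwards [eventually_atTop_add_right (eventually_forall_ge_atTop.mpr hx) (n - p • evec s)]
    with a ha f hf
  have hclimb (t : ℕ) (ht : t ≤ p) : r * f ∈ F.F (a + (n - p • evec s) + t • evec s) := by
    induction t with
    | zero =>
      refine F.antitone _ _ ?_ ((F.F a).mul_mem_left r hf)
      rw [zero_nsmul, add_zero]
      exact add_le_of_nonpos_right (sub_nonpos.mpr hnp)
    | succ t ih =>
      rw [succ_nsmul, ← add_assoc]
      refine ha _ (le_add_of_nonneg_right (nsmul_nonneg (evec_nonneg s) t)) _
        (ih (Nat.le_of_succ_le ht)) ?_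
      rw [← mul_assoc]
      refine F.mul_mem ?_ hr hf
      have hle : (t + 1) • evec s ≤ p • evec s := nsmul_le_nsmul_left (evec_nonneg s) ht
      calc a + (n - p • evec s) + t • evec s + Pi.single i 1 + evec s
          = n + Pi.single i 1 + a + ((t + 1) • evec s - p • evec s) := by
            rw [succ_nsmul]
            abel
        _ ≤ n + Pi.single i 1 + a := add_le_of_nonpos_right (sub_nonpos.mpr hle)
  have htop := hclimb p le_rfl
  rwa [add_assoc, sub_add_cancel, add_comm a] at htop

theorem eventually_F_add_sum_single_le {K : Ideal R} {x : Fin s → R}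
    (h : ∀ i, ∀ᶠ n in atTop, F.F (n + Pi.single i 1) ≤ Ideal.span {x i} * F.F n ⊔ K)
    (T : Finset (Fin s)) : ∀ᶠ n in atTop,
      F.F (n + ∑ i ∈ T, Pi.single i 1) ≤ Ideal.span {∏ i ∈ T, x i} * F.F n ⊔ K := by
  induction T using Finset.induction_on with
  | empty => simp
  | insert j T hj ih =>
    filter_upwards [ih, eventually_atTop_add_right (h j) (∑ i ∈ T, Pi.single i 1)] with n hT hjn
    rw [Finset.prod_insert hj, Finset.sum_insert hj, add_comm (Pi.single j 1), ← add_assoc,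
      ← Ideal.span_singleton_mul_span_singleton, mul_assoc]
    refine hjn.trans (sup_le ((Ideal.mul_mono_right hT).trans ?_) le_sup_right)
    rw [Ideal.mul_sup]
    exact sup_le_sup_left Ideal.mul_le_right _

section InfiniteResidueField

variable [IsLocalRing R] [IsNoetherianRing R] [Infinite (ResidueField R)]

theorem exists_mem_eventually_of_mul_mem (F : AdmissibleFiltration R s I) (K : Ideal R)
    (a : Fin s → ℤ) (i : Fin s) :
    ∃ x ∈ I i, ∀ᶠ n in atTop, ∀ f ∈ F.F n,
      x * f ∈ F.F (n + Pi.single i 1 + a) ⊔ K → f ∈ F.F (n + a) ⊔ K := by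
  obtain ⟨m, hm⟩ := eventually_atTop.mp F.eventually_forall_F_add
  have hF (n : Fin s → ℤ) (hn : n ≥ m) (j : Fin s) :
      F.F (n + Pi.single j 1) ≤ I j * F.F n := by
    rw [hm n hn _ (Pi.single_nonneg.mpr zero_le_one), prodPow_single]
  have hG (j : Fin s) (n : Fin s → ℤ) :
      I j * (F.F (n + a) ⊔ K) ≤ F.F (n + Pi.single j 1 + a) ⊔ K := by
    rw [Ideal.mul_sup, add_right_comm, add_comm (n + a)]
    exact sup_le_sup ((Ideal.mul_mono_left (F.ideal_le j)).trans (F.mul_le _ _)) Ideal.mul_le_right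
  obtain ⟨x, hx, c, hc⟩ := exists_mem_forall_mul_mem hF hG i
  refine ⟨x, hx, ?_⟩
  filter_upwards [eventually_ge_atTop m, eventually_ge_atTop fun _ => c] with n hmn hcn
  exact hc n hmn (hcn i)

theorem H1ReesVanishes.exists_colon_prod_eq (hF : H1ReesVanishes F) :
    ∃ x : Fin s → R, (∀ i, x i ∈ I i) ∧
      ∀ n, 0 ≤ n → (F.F (n + evec s)).colon {∏ i, x i} = F.F n := by
  choose x hx hmem using exists_mem_eventually_of_mul_mem F ⊥ (evec s)
  simp only [sup_bot_eq] at hmem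
  have hprod (T : Finset (Fin s)) : ∀ n, 0 ≤ n → ∀ r,
      (∏ i ∈ T, x i) * r ∈ F.F (n + ∑ i ∈ T, Pi.single i 1) → r ∈ F.F n := by
    induction T using Finset.induction_on with
    | empty => simp
    | insert j T hj ih =>
      intro n hn r hr
      rw [Finset.prod_insert hj, Finset.sum_insert hj, mul_assoc, add_comm (Pi.single j 1),
        ← add_assoc] at hr
      refine ih n hn r (hF.mem_of_mul_mem (hmem j) (add_nonneg hn ?_) hr)
      exact Finset.sum_nonneg fun i _ => Pi.single_nonneg.mpr zero_le_one
  refine ⟨x, hx, fun n hn => le_antisymm (fun r hr => ?_) fun r hr => ?_⟩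
  · refine hprod Finset.univ n hn r ?_
    rw [show ∑ i, Pi.single i 1 = evec s from Finset.univ_sum_single (evec s), mul_comm]
    exact Submodule.mem_colon_singleton.mp hr
  · exact Submodule.mem_colon_singleton.mpr (F.mul_mem le_rfl hr (F.prod_mem hx))

end InfiniteResidueField

variable [IsLocalRing R] [IsNoetherianRing R]

theorem exists_eventually_lenI_quotient_sup_span_singleton_add_single
    (hI : ∀ i, maximalIdeal R ≤ (I i).radical) {c : (Fin s → ℕ) → ℤ} (hc : IsHilbCoeffs F 2 c)
    {y : R} (hy : ∀ n, 0 ≤ n → (F.F (n + evec s)).colon {y} = F.F n) (i : Fin s) :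
    ∃ κ : ℤ, ∀ᶠ n in atTop, lenI R (R ⧸ F.F (n + Pi.single i 1) ⊔ Ideal.span {y}) =
      lenI R (R ⧸ F.F n ⊔ Ideal.span {y}) + κ := by
  have hΔP : ∀ᶠ n in atTop, lenI R (R ⧸ F.F n ⊔ Ideal.span {y}) =
      Δ_[evec s] (hilbPoly s 2 c) (n - evec s) := by
    have hP := hc.eventually_hilbFn_eq
    filter_upwards [hP, eventually_atTop_add_right hP (-evec s),
      eventually_ge_atTop (evec s)] with n hn hne hle
    rw [← sub_eq_add_neg] at hne
    have hcolon := hy (n - evec s) (sub_nonneg.mpr hle)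
    rw [sub_add_cancel] at hcolon
    rw [lenI_quotient_sup_span_singleton (F.maximalIdeal_le_radical hI n), hcolon, fwdDiff,
      sub_add_cancel, ← hn, ← hne, hilbFn, hilbFn]
  refine ⟨Δ_[Pi.single i 1] (Δ_[evec s] (hilbPoly s 2 c)) 0, ?_⟩
  filter_upwards [hΔP, eventually_atTop_add_right hΔP (Pi.single i 1)] with n hn hni
  have hconst := (polyDegreeLE_hilbPoly s 2 c (evec s) (Pi.single i 1)).eq_apply_zero
  rw [hn, hni, add_sub_right_comm, ← hconst (n - evec s)]
  exact (add_sub_cancel _ _).symm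

theorem eventually_F_add_single_le_sup (hI : ∀ i, maximalIdeal R ≤ (I i).radical) {K : Ideal R}
    {x : R} {i : Fin s} (hxi : x ∈ I i)
    (hx : ∀ᶠ n in atTop, ∀ f ∈ F.F n,
      x * f ∈ F.F (n + Pi.single i 1 + evec s) ⊔ K → f ∈ F.F (n + evec s) ⊔ K)
    {κ : ℤ} (hκ : ∀ᶠ n in atTop,
      lenI R (R ⧸ F.F (n + Pi.single i 1) ⊔ K) = lenI R (R ⧸ F.F n ⊔ K) + κ) :
    ∀ᶠ n in atTop, F.F (n + Pi.single i 1) ≤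
      Ideal.span {x} * F.F n ⊔ K ⊔ F.F (n + Pi.single i 1 + evec s) := by
  have hrad (n : Fin s → ℤ) : maximalIdeal R ≤ (F.F n ⊔ K).radical :=
    (F.maximalIdeal_le_radical hI n).trans (Ideal.radical_mono le_sup_left)
  have hanti (n : Fin s → ℤ) : F.F (n + evec s) ≤ F.F n :=
    F.antitone _ _ (le_add_of_nonneg_right (evec_nonneg s))
  have hmul (n : Fin s → ℤ) : Ideal.span {x} * F.F n ≤ F.F (n + Pi.single i 1) :=
    Ideal.span_singleton_mul_le_iff.mpr fun f hf =>
      F.mul_mem (add_comm _ _).le (F.ideal_le i hxi) hf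
  filter_upwards [hx, hκ, eventually_atTop_add_right hκ (evec s)] with n hxn hκn hκne
  rw [add_right_comm] at hκne
  let A := F.F n ⊔ K
  let C := F.F (n + Pi.single i 1 + evec s) ⊔ K
  have hcolon : A ⊓ C.colon {x} = F.F (n + evec s) ⊔ K := by
    refine sup_inf_colon_singleton_eq (hanti n) ?_ hxn
    rw [add_right_comm]
    exact hmul (n + evec s)
  have hle : Ideal.span {x} * A ⊔ C ≤ F.F (n + Pi.single i 1) ⊔ K := by
    rw [Ideal.mul_sup]
    exact sup_le (sup_le_sup (hmul n) Ideal.mul_le_right) (sup_le_sup_right (hanti _) K)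
  have hlen := lenI_quotient_add_lenI_quotient (hrad n) (hrad (n + Pi.single i 1 + evec s)) x
  rw [hcolon] at hlen
  have heq := eq_of_le_of_lenI_quotient_le hle ((hrad _).trans (Ideal.radical_mono le_sup_right))
    (by linarith)
  refine le_sup_left.trans (heq.ge.trans ?_)
  rw [Ideal.mul_sup]
  exact sup_le ((sup_le_sup_left Ideal.mul_le_right _).trans le_sup_left)
    (sup_le le_sup_right (le_sup_right.trans le_sup_left))

theorem eventually_F_add_single_le (hI : ∀ i, IsMPrimary R (I i)) {K : Ideal R} {x : R} {i : Fin s}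
    (hxi : x ∈ I i)
    (hx : ∀ᶠ n in atTop, ∀ f ∈ F.F n,
      x * f ∈ F.F (n + Pi.single i 1 + evec s) ⊔ K → f ∈ F.F (n + evec s) ⊔ K)
    {κ : ℤ} (hκ : ∀ᶠ n in atTop,
      lenI R (R ⧸ F.F (n + Pi.single i 1) ⊔ K) = lenI R (R ⧸ F.F n ⊔ K) + κ) :
    ∀ᶠ n in atTop, F.F (n + Pi.single i 1) ≤ Ideal.span {x} * F.F n ⊔ K := by
  have hprod : prodPow I (evec s) ≤ maximalIdeal R := by
    rw [prodPow_evec]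
    exact (Ideal.prod_le_inf.trans (Finset.inf_le (Finset.mem_univ i))).trans
      (le_maximalIdeal (hI i).1)
  filter_upwards [eventually_F_add_single_le_sup (fun i => (hI i).2) hxi hx hκ,
    eventually_atTop_add_right F.eventually_forall_F_add (Pi.single i 1)] with n hn hF
  refine Submodule.le_of_le_smul_of_le_jacobson_bot (IsNoetherian.noetherian _)
    (maximalIdeal_le_jacobson _) (hn.trans (sup_le_sup_left ?_ _))
  rw [hF _ (evec_nonneg s), smul_eq_mul]
  exact Ideal.mul_mono_left hprod

theorem H1ReesVanishes.exists_isGoodCompleteReduction [Infinite (ResidueField R)]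
    (hF : H1ReesVanishes F) (hI : ∀ i, IsMPrimary R (I i)) {c : (Fin s → ℕ) → ℤ}
    (hc : IsHilbCoeffs F 2 c) : ∃ x : Fin s → Fin 2 → R, IsGoodCompleteReduction F x := by
  obtain ⟨x₁, hx₁, hcolon⟩ := hF.exists_colon_prod_eq
  let y := ∏ i, x₁ i
  choose x₂ hx₂ hsuper using exists_mem_eventually_of_mul_mem F (Ideal.span {y}) (evec s)
  have hle (i : Fin s) : ∀ᶠ n in atTop,
      F.F (n + Pi.single i 1) ≤ Ideal.span {x₂ i} * F.F n ⊔ Ideal.span {y} := by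
    obtain ⟨κ, hκ⟩ := exists_eventually_lenI_quotient_sup_span_singleton_add_single
      (fun i => (hI i).2) hc hcolon i
    exact eventually_F_add_single_le hI (hx₂ i) (hsuper i) hκ
  have hsum := eventually_F_add_sum_single_le hle Finset.univ
  rw [show ∑ i, Pi.single i 1 = evec s from Finset.univ_sum_single (evec s)] at hsum
  let x : Fin s → Fin 2 → R := fun i => ![x₁ i, x₂ i]
  have hx (i : Fin s) : ∀ j, x i j ∈ I i := Fin.forall_fin_two.mpr ⟨hx₁ i, hx₂ i⟩
  have hmem (j : Fin 2) : ∏ i, x i j ∈ crIdeal x := Ideal.subset_span (Set.mem_range_self j)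
  refine ⟨x, ⟨hx, eventually_atTop_iff_exists_nat.mp ?_⟩,
    fun _ => eventually_atTop_iff_exists_nat.mp ?_⟩
  · filter_upwards [hsum, eventually_ge_atTop 0] with n hn hn₀
    refine le_antisymm (crIdeal_mul_le F hx n) fun f hf => ?_
    obtain ⟨a, ha, b, hb, rfl⟩ := Submodule.mem_sup.mp (hn hf)
    obtain ⟨g, hg, rfl⟩ := Ideal.mem_span_singleton_mul.mp ha
    obtain ⟨r, rfl⟩ := Ideal.mem_span_singleton'.mp hb
    have hg' : (∏ i, x₂ i) * g ∈ F.F (n + evec s) :=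
      F.mul_mem (add_comm _ _).le (F.prod_mem hx₂) hg
    have hr : r ∈ F.F n := by
      rw [← hcolon n hn₀]
      exact Submodule.mem_colon_singleton.mpr ((Submodule.add_mem_iff_right _ hg').mp hf)
    exact add_mem (Ideal.mul_mem_mul (hmem 1) hg) (mul_comm y r ▸ Ideal.mul_mem_mul (hmem 0) hr)
  · filter_upwards [eventually_ge_atTop (evec s)] with m hm
    have hcolon' := hcolon (m - evec s) (sub_nonneg.mpr hm)
    rw [sub_add_cancel] at hcolon'
    exact inf_span_singleton_eq_mul hcolon'

end GoodReduction

/-- STATEMENT 18: Let `(R,m)` be Cohen–Macaulay local of dimension two with infinite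
residue field, `I₁,…,I_s` `m`-primary with `s ≥ 2`, `F` an `I`-admissible filtration
with `H¹_{R₊₊}(R(F))_n = 0` for all `n ≥ 0` (by Proposition 4.1 of the paper this is
the condition `F̆(n) = F(n)` for all `n ≥ 0`).  Then the following are equivalent:
(1) `P(F) = ℕˢ`, i.e. `P_F(n) = H_F(n)` for all `n ≥ 0`;
(2) `r_A(F) ≤ 1` for every good complete reduction `A` of `F`;
(2') there exists a good complete reduction `A` of `F` with `r_A(F) ≤ 1`. -/
theorem postulation_iff_reduction_number_le_one
    (R : Type*) [CommRing R] [IsLocalRing R] [IsNoetherianRing R]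
    [Infinite (IsLocalRing.ResidueField R)]
    (s : ℕ) (hs : 2 ≤ s) (hdim : ringKrullDim R = 2) (hCM : IsCMLocal R)
    (I : Fin s → Ideal R) (hI : ∀ i, IsMPrimary R (I i))
    (F : AdmissibleFiltration R s I)
    (c : (Fin s → ℕ) → ℤ) (hc : IsHilbCoeffs F 2 c)
    (hvanish : H1ReesVanishes F) :
    ((postSet F 2 c = {n | 0 ≤ n})
      ↔ (∀ x : Fin s → Fin 2 → R, IsGoodCompleteReduction F x → crNumber F x ≤ 1))
    ∧ ((∀ x : Fin s → Fin 2 → R, IsGoodCompleteReduction F x → crNumber F x ≤ 1)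
      ↔ (∃ x : Fin s → Fin 2 → R, IsGoodCompleteReduction F x ∧ crNumber F x ≤ 1)) := by
  obtain ⟨x₀, hx₀⟩ := hvanish.exists_isGoodCompleteReduction hI hc
  have key (x : Fin s → Fin 2 → R) (hx : IsGoodCompleteReduction F x) :
      postSet F 2 c = {n | 0 ≤ n} ↔ crNumber F x ≤ 1 :=
    postSet_eq_iff_crNumber_le_one hs hdim hCM hI hvanish hc hx.1
  have h_one_two (h : postSet F 2 c = {n | 0 ≤ n}) (x : Fin s → Fin 2 → R)
      (hx : IsGoodCompleteReduction F x) : crNumber F x ≤ 1 :=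
    (key x hx).mp h
  refine ⟨⟨h_one_two, fun h => (key x₀ hx₀).mpr (h x₀ hx₀)⟩, fun h => ⟨x₀, hx₀, h x₀ hx₀⟩, ?_⟩
  rintro ⟨x, hx, hr⟩
  exact h_one_two ((key x hx).mpr hr)
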